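/- arXiv:2406.13687 — 6 statements merged into one kernel-verified Lean document; each statement's English description precedes it below -/
import Mathlib

section
/- Let A_n = [a_n, b_n] be a sequence of compact intervals in ℝ with b_n − a_n → ∞, and assume there exists a constant d > 0 such that |a_n| < d·(b_n − a_n) for all n. Then the counting autocorrelation of the set ℙ_pow of prime powers and their negatives with respect to (A_n) exists and equals δ_0: writing F_n = ℙ_pow ∩ A_n, for every continuous compactly supported f : ℝ → ℂ one has (1/card F_n)·Σ_{x,y∈F_n} f(x−y) → f(0) as n → ∞. -/
open Filter Topology Set

/-- The set of prime powers and their negatives, as a subset of `ℝ`. -/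
def PrimePowR : Set ℝ :=
  {x | ∃ p k : ℕ, p.Prime ∧ 1 ≤ k ∧ (x = ((p ^ k : ℕ) : ℝ) ∨ x = -((p ^ k : ℕ) : ℝ))}

/-- The (counting-normalised) autocorrelation sum of the finite sample `F` applied to a
test function `f`; interpreted as `0` when `F = ∅` (since then `(F.ncard : ℂ)⁻¹ = 0`). -/
noncomputable def autoCorr (F : Set ℝ) (f : ℝ → ℂ) : ℂ :=
  ((F.ncard : ℂ))⁻¹ * ∑ᶠ x ∈ F, ∑ᶠ y ∈ F, f (x - y)

/-!
Let `T = max |a| |b|`. Since `|a|` is bounded by a multiple of `b - a`, the interval `[a, b]`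
contains a fixed proportion `[θ T, T]` of `[0, T]`, up to sign. It therefore suffices that
`[θ T, T]` contains `≫ T / log T` prime powers and that, for each `h ≠ 0`, only `o(T / log T)`
prime powers `n ≤ T` have `n + h` a prime power: then every nonzero difference has frequency
tending to zero, and only the diagonal `x = y` survives.

The lower bound is a weak Wiener–Ikehara theorem. The Dirichlet series of `Λ - 1` extends
continuously to the line `re s = 1`, so by the Riemann–Lebesgue lemma `Λ` and `1` have
asymptotically the same mass when smoothed by a Fejér kernel on a logarithmic scale; Chebyshev's
bound controls the tail of the kernel.

The upper bound is Brun's pure sieve applied to `n * (n + h)`, together with the fact that there are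
only `O(√T)` prime powers up to `T` that are not primes.
-/

open Real Asymptotics
open scoped Finset ArithmeticFunction.vonMangoldt

/-! ### The Fejér kernel -/

section FejerKernel

/-- The Fejér kernel of bandwidth `l`: the Fourier transform of the tent function
`t ↦ max (1 - |t| / l) 0`, see `integral_tent_mul_cos`. -/
noncomputable def fejerKernel (l u : ℝ) : ℝ := l * sinc (l * u / 2) ^ 2

variable {l u : ℝ}

lemma fejerKernel_nonneg (hl : 0 ≤ l) : 0 ≤ fejerKernel l u := by
  unfold fejerKernel; positivity

lemma fejerKernel_le (hl : 0 ≤ l) : fejerKernel l u ≤ l :=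
  mul_le_of_le_one_right hl ((sq_le_one_iff_abs_le_one _).2 (abs_sinc_le_one _))

lemma fejerKernel_of_ne_zero (hl : l ≠ 0) (hu : u ≠ 0) :
    fejerKernel l u = 4 * sin (l * u / 2) ^ 2 / (l * u ^ 2) := by
  rw [fejerKernel, sinc_of_ne_zero (by positivity)]
  field_simp
  ring

lemma fejerKernel_le_four_div (hl : 0 < l) (hu : u ≠ 0) : fejerKernel l u ≤ 4 / (l * u ^ 2) := by
  rw [fejerKernel_of_ne_zero hl.ne' hu]
  gcongr
  linarith [sin_sq_le_one (l * u / 2)]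

lemma fejerKernel_le_of_le_abs {δ : ℝ} (hl : 0 < l) (hδ : 0 < δ) (hu : δ ≤ |u|) :
    fejerKernel l u ≤ 4 / l * (1 + (δ ^ 2)⁻¹) * (1 + u ^ 2)⁻¹ := by
  have hu0 : u ≠ 0 := abs_pos.1 (hδ.trans_le hu)
  have hsq : δ ^ 2 ≤ u ^ 2 := sq_le_sq.2 (by rwa [abs_of_pos hδ])
  calc fejerKernel l u ≤ 4 / (l * u ^ 2) := fejerKernel_le_four_div hl hu0
    _ = 4 / l * (1 + (u ^ 2)⁻¹) * (1 + u ^ 2)⁻¹ := by field_simp; ring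
    _ ≤ 4 / l * (1 + (δ ^ 2)⁻¹) * (1 + u ^ 2)⁻¹ := by gcongr

lemma half_le_sinc {v : ℝ} (hv : |v| ≤ 1) : 1 / 2 ≤ sinc v := by
  wlog hpos : 0 < v generalizing v
  · rcases (not_lt.1 hpos).eq_or_lt with rfl | hneg
    · norm_num
    · simpa using this (v := -v) (by simpa using hv) (by linarith)
  rw [sinc_of_ne_zero hpos.ne', le_div_iff₀ hpos]
  have hsin := mul_le_sin hpos.le (by linarith [le_abs_self v, pi_gt_three])
  have hpi : 1 / 2 ≤ 2 / π := by
    rw [div_le_div_iff₀ two_pos pi_pos]; linarith [pi_le_four]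
  exact (mul_le_mul_of_nonneg_right hpi hpos.le).trans hsin

lemma div_four_le_fejerKernel (hl : 0 ≤ l) (hu : l * |u| ≤ 1) : l / 4 ≤ fejerKernel l u := by
  have hsinc : 1 / 2 ≤ sinc (l * u / 2) := half_le_sinc <| by
    rw [abs_div, abs_mul, abs_of_nonneg hl, abs_two]; linarith
  have hsq : (1 / 2 : ℝ) ^ 2 ≤ sinc (l * u / 2) ^ 2 := by gcongr
  calc l / 4 = l * (1 / 2) ^ 2 := by ring
    _ ≤ fejerKernel l u := mul_le_mul_of_nonneg_left hsq hl

lemma integral_tent_mul_cos (hl : l ≠ 0) (u : ℝ) :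
    ∫ t in 0..l, 2 * (1 - t / l) * cos (t * u) = fejerKernel l u := by
  rcases eq_or_ne u 0 with rfl | hu
  · have hderiv (t : ℝ) : HasDerivAt (fun t => 2 * t - t ^ 2 / l) (2 * (1 - t / l)) t := by
      convert! ((hasDerivAt_id t).const_mul 2).sub ((hasDerivAt_pow 2 t).div_const l) using 1
      simp only [mul_one, Nat.cast_ofNat, Nat.add_one_sub_one, pow_one]
      ring
    have hint := intervalIntegral.integral_eq_sub_of_hasDerivAt (a := 0) (b := l)
      (fun t _ => hderiv t) (Continuous.intervalIntegrable (by fun_prop) _ _)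
    simp only [mul_zero, cos_zero, mul_one, hint, fejerKernel, zero_div, sinc_zero]
    field_simp
    ring
  have hderiv (t : ℝ) : HasDerivAt
      (fun t => 2 * (1 - t / l) * sin (t * u) / u - 2 * cos (t * u) / (l * u ^ 2))
      (2 * (1 - t / l) * cos (t * u)) t := by
    have htent : HasDerivAt (fun t => 2 * (1 - t / l)) (2 * (-(1 / l))) t := by
      simpa using (((hasDerivAt_id t).div_const l).const_sub 1).const_mul 2
    have hsin : HasDerivAt (fun t => sin (t * u)) (cos (t * u) * u) t := by
      simpa using ((hasDerivAt_id t).mul_const u).sin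
    have hcos : HasDerivAt (fun t => cos (t * u)) (-sin (t * u) * u) t := by
      simpa using ((hasDerivAt_id t).mul_const u).cos
    convert! ((htent.mul hsin).div_const u).sub ((hcos.const_mul 2).div_const (l * u ^ 2)) using 1
    field_simp
    ring
  have hint := intervalIntegral.integral_eq_sub_of_hasDerivAt (a := 0) (b := l)
    (fun t _ => hderiv t) (Continuous.intervalIntegrable (by fun_prop) _ _)
  have hhalf : cos (l * u) = 1 - 2 * sin (l * u / 2) ^ 2 := by
    rw [← mul_div_cancel₀ (l * u) two_ne_zero, cos_two_mul, cos_sq']; ring_nf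
  rw [hint, fejerKernel_of_ne_zero hl hu]
  simp only [div_self hl, zero_mul, zero_div, sin_zero, cos_zero, sub_self, mul_zero, hhalf]
  field_simp
  ring

end FejerKernel

/-! ### Smoothing a Dirichlet series by the Fejér kernel -/

section SmoothedSeries

/-- The value at `x` of the Dirichlet series `G` on the line `re = s`, smoothed by the Fejér
kernel: the Fourier inversion integral of `t ↦ G (s + t * I)` against the tent function, see
`hasSum_mul_fejerKernel`. -/
noncomputable def fejerSmoothing (G : ℂ → ℂ) (l s x : ℝ) : ℝ :=
  ∫ t in 0..l, 2 * (1 - t / l) * (Complex.exp (Complex.I * t * x) * G (s + t * Complex.I)).re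

variable {c : ℕ → ℝ} {G : ℂ → ℂ} {l s : ℝ}

lemma re_exp_mul_term (c : ℕ → ℝ) (hs : s ≠ 0) (t x : ℝ) (n : ℕ) :
    (Complex.exp (Complex.I * t * x) *
      LSeries.term (fun n => (c n : ℂ)) (s + t * Complex.I) n).re =
      c n * (n : ℝ) ^ (-s) * cos (t * (log n - x)) := by
  rcases n.eq_zero_or_pos with rfl | hn
  · simp [zero_rpow (neg_ne_zero.2 hs)]
  rw [LSeries.term_of_ne_zero hn.ne', div_eq_mul_inv, ← Complex.cpow_neg,
    Complex.cpow_def_of_ne_zero (by exact_mod_cast hn.ne'), ← Complex.natCast_log, mul_left_comm,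
    ← Complex.exp_add, Complex.re_ofReal_mul, Complex.exp_re, rpow_def_of_pos (by positivity),
    mul_assoc (c n), ← cos_neg]
  generalize log n = L
  congr 3
  · simp
  · simp only [neg_add_rev, Complex.add_im, Complex.mul_im, Complex.mul_re, Complex.I_re,
      Complex.ofReal_re, zero_mul, Complex.I_im, Complex.ofReal_im, mul_zero, sub_self, one_mul,
      zero_add, Complex.neg_im, mul_one, add_zero, neg_zero, mul_neg, Complex.add_re,
      Complex.neg_re, neg_neg]
    ring

lemma norm_term_ofReal (c : ℕ → ℝ) (hs : s ≠ 0) (n : ℕ) :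
    ‖LSeries.term (fun n => (c n : ℂ)) s n‖ = |c n| * (n : ℝ) ^ (-s) := by
  rcases n.eq_zero_or_pos with rfl | hn
  · simp [zero_rpow (neg_ne_zero.2 hs)]
  rw [LSeries.term_of_ne_zero hn.ne', norm_div, Complex.norm_natCast_cpow_of_pos hn,
    Complex.norm_real, norm_eq_abs, Complex.ofReal_re, rpow_neg (by positivity), div_eq_mul_inv]

lemma hasSum_mul_fejerKernel (hl : 0 < l) (hs : 1 < s)
    (hG : ∀ z : ℂ, 1 < z.re → LSeriesHasSum (fun n => (c n : ℂ)) z (G z)) (x : ℝ) :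
    HasSum (fun n : ℕ => c n * (n : ℝ) ^ (-s) * fejerKernel l (log n - x))
      (fejerSmoothing G l s x) := by
  have hs0 : s ≠ 0 := by positivity
  have hsummable : Summable fun n : ℕ => |c n| * (n : ℝ) ^ (-s) :=
    ((hG s (by simpa using hs)).summable.norm).congr (norm_term_ofReal c hs0)
  have hterm (t : ℝ) : HasSum (fun n : ℕ => c n * (n : ℝ) ^ (-s) * cos (t * (log n - x)))
      (Complex.exp (Complex.I * t * x) * G (s + t * Complex.I)).re := by
    simpa only [re_exp_mul_term c hs0] using
      Complex.hasSum_re ((hG (s + t * Complex.I) (by simpa using hs)).mul_left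
        (Complex.exp (Complex.I * t * x)))
  simp_rw [← integral_tent_mul_cos hl.ne', ← intervalIntegral.integral_const_mul]
  refine intervalIntegral.hasSum_integral_of_dominated_convergence
    (fun n _ => |c n| * (n : ℝ) ^ (-s) * 2) (fun n => ?_) (fun n => ?_)
    (.of_forall fun t _ => hsummable.mul_right 2) (by simp) (.of_forall fun t _ => ?_)
  · exact Continuous.aestronglyMeasurable (by fun_prop)
  · refine .of_forall fun t ht => ?_
    rw [uIoc_of_le hl.le] at ht
    have htent : |1 - t / l| ≤ 1 := by
      have := div_le_one_of_le₀ ht.2 hl.le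
      have := div_nonneg ht.1.le hl.le
      rw [abs_le]; constructor <;> linarith
    rw [norm_mul, norm_mul, norm_mul, norm_mul, norm_eq_abs, norm_eq_abs, norm_eq_abs, norm_eq_abs,
      norm_eq_abs, abs_two, abs_of_nonneg (rpow_nonneg n.cast_nonneg _)]
    gcongr
    calc 2 * |1 - t / l| * |cos (t * (log n - x))| ≤ 2 * 1 * 1 := by
          gcongr; exact abs_cos_le_one _
      _ = 2 := by norm_num
  · simpa only [mul_left_comm] using (hterm t).mul_left (2 * (1 - t / l))

lemma continuous_fejerSmoothing (hG : Continuous G) (l x : ℝ) :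
    Continuous fun s => fejerSmoothing G l s x :=
  intervalIntegral.continuous_parametric_intervalIntegral_of_continuous' (by fun_prop) 0 l

lemma tendsto_fejerSmoothing_atTop (hG : Continuous G) (hl : 0 ≤ l) (s : ℝ) :
    Tendsto (fejerSmoothing G l s) atTop (𝓝 0) := by
  let H : ℝ → ℂ := fun t => (2 * (1 - t / l) : ℝ) * G (s + t * Complex.I)
  have hH : Continuous H := by fun_prop
  have hfreq : Tendsto (fun x : ℝ => -(x / (2 * π))) atTop (cocompact ℝ) :=
    (tendsto_neg_atTop_atBot.comp (tendsto_id.atTop_div_const (by positivity))).mono_right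
      atBot_le_cocompact
  have hchar (t x : ℝ) : fourierChar (-(t * -(x / (2 * π)))) • (Ioc 0 l).indicator H t =
      (Ioc 0 l).indicator (fun t : ℝ => Complex.exp (Complex.I * t * x) * H t) t := by
    rw [Circle.smul_def, smul_eq_mul, fourierChar_apply,
      indicator_mul_right _ fun t : ℝ => Complex.exp (Complex.I * t * x)]
    congr 2
    push_cast
    field_simp
  have hRL := (Complex.continuous_re.tendsto 0).comp
    ((Real.tendsto_integral_exp_smul_cocompact ((Ioc 0 l).indicator H)).comp hfreq)
  refine hRL.congr fun x => ?_
  have hcont : Continuous fun t : ℝ => Complex.exp (Complex.I * t * x) * H t := by fun_prop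
  calc (∫ t, fourierChar (-(t * -(x / (2 * π)))) • (Ioc 0 l).indicator H t).re
      = (∫ t in 0..l, Complex.exp (Complex.I * t * x) * H t).re := by
        simp_rw [hchar, MeasureTheory.integral_indicator measurableSet_Ioc,
          intervalIntegral.integral_of_le hl]
    _ = ∫ t in 0..l, (Complex.exp (Complex.I * t * x) * H t).re :=
        (Complex.reCLM.intervalIntegral_comp_comm (hcont.intervalIntegrable 0 l)).symm
    _ = fejerSmoothing G l s x := by
        simp_rw [H, mul_left_comm (Complex.exp _), Complex.re_ofReal_mul, fejerSmoothing]

end SmoothedSeries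

/-! ### A Tauberian lower bound -/

section Tauberian

/-- The integers in `(exp x, exp y]`, i.e. the positive integers with logarithm in `(x, y]`: the
windows, on the logarithmic scale, in which the Fejér kernel localises sums. -/
noncomputable def logWindow (x y : ℝ) : Finset ℕ := Finset.Ioc ⌊exp x⌋₊ ⌊exp y⌋₊

variable {x y : ℝ} {n : ℕ}

lemma mem_logWindow : n ∈ logWindow x y ↔ exp x < n ∧ n ≤ exp y := by
  rw [logWindow, Finset.mem_Ioc, Nat.floor_lt (exp_pos x).le, Nat.le_floor_iff (exp_pos y).le]

lemma mem_logWindow_iff_log (hn : 0 < n) : n ∈ logWindow x y ↔ x < log n ∧ log n ≤ y := by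
  have hn' : (0 : ℝ) < n := by exact_mod_cast hn
  rw [mem_logWindow, lt_log_iff_exp_lt hn', log_le_iff_le_exp hn']

lemma pos_of_mem_logWindow (hn : n ∈ logWindow x y) : 0 < n := by
  exact_mod_cast (exp_pos x).trans (mem_logWindow.1 hn).1

lemma one_sub_exp_sub_exp_le_sum_inv (hxy : x ≤ y) :
    1 - exp (x - y) - exp (-y) ≤ ∑ n ∈ logWindow x y, (n : ℝ)⁻¹ := by
  have hcard : exp y - exp x - 1 ≤ #(logWindow x y) := by
    rw [logWindow, Nat.card_Ioc, Nat.cast_sub (Nat.floor_le_floor (exp_le_exp.2 hxy))]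
    linarith [Nat.lt_floor_add_one (exp y), Nat.floor_le (exp_pos x).le]
  calc 1 - exp (x - y) - exp (-y) = (exp y - exp x - 1) * exp (-y) := by
        rw [sub_mul, sub_mul, ← exp_add, ← exp_add, add_neg_cancel, exp_zero, one_mul,
          sub_eq_add_neg x y]
    _ ≤ #(logWindow x y) * exp (-y) := by gcongr
    _ = ∑ _n ∈ logWindow x y, exp (-y) := by rw [Finset.sum_const, nsmul_eq_mul]
    _ ≤ ∑ n ∈ logWindow x y, (n : ℝ)⁻¹ := Finset.sum_le_sum fun n hn => by
        have hn0 := pos_of_mem_logWindow hn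
        rw [exp_neg]
        gcongr
        exact (mem_logWindow.1 hn).2

lemma summable_inv_one_add_sq_int : Summable fun m : ℤ => (1 + (m : ℝ) ^ 2)⁻¹ := by
  refine (summable_one_div_int_pow.2 one_lt_two).of_norm_bounded_eventually ?_
  filter_upwards [(finite_singleton (0 : ℤ)).compl_mem_cofinite] with m hm
  have hm' : (m : ℝ) ≠ 0 := by exact_mod_cast hm
  rw [norm_of_nonneg (by positivity), one_div]
  gcongr
  linarith

variable {a : ℕ → ℝ} {C : ℝ}

lemma sum_logWindow_div_le (ha : ∀ n, 0 ≤ a n)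
    (hC : ∀ x, 0 ≤ x → ∑ n ∈ Finset.Ioc 0 ⌊x⌋₊, a n ≤ C * x) (x y : ℝ) :
    ∑ n ∈ logWindow x y, a n / n ≤ C * exp (y - x) := by
  calc ∑ n ∈ logWindow x y, a n / n ≤ ∑ n ∈ logWindow x y, a n / exp x :=
        Finset.sum_le_sum fun n hn => by
          gcongr
          exacts [ha n, (mem_logWindow.1 hn).1.le]
    _ = (∑ n ∈ logWindow x y, a n) / exp x := by rw [Finset.sum_div]
    _ ≤ (∑ n ∈ Finset.Ioc 0 ⌊exp y⌋₊, a n) / exp x := by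
        gcongr
        exacts [fun n _ _ => ha n, Finset.Ioc_subset_Ioc_left (Nat.zero_le _)]
    _ ≤ C * exp y / exp x := by
        gcongr
        exact hC _ (exp_pos y).le
    _ = C * exp (y - x) := by rw [exp_sub, mul_div_assoc]

lemma inv_one_add_sq_le_of_abs_sub_le_one {u v : ℝ} (h : |u - v| ≤ 1) :
    (1 + u ^ 2)⁻¹ ≤ 3 * (1 + v ^ 2)⁻¹ := by
  rw [← div_eq_mul_inv, ← one_div, div_le_div_iff₀ (by positivity) (by positivity)]
  have : (u - v) ^ 2 ≤ 1 := (sq_le_one_iff_abs_le_one _).2 h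
  nlinarith [sq_nonneg (2 * u - v)]

lemma sum_div_one_add_sq_le_of_ceil_eq (ha : ∀ n, 0 ≤ a n)
    (hC : ∀ x, 0 ≤ x → ∑ n ∈ Finset.Ioc 0 ⌊x⌋₊, a n ≤ C * x) (x : ℝ) (m : ℤ) {S : Finset ℕ}
    (hS : ∀ n ∈ S, 0 < n ∧ ⌈log n - x⌉ = m) :
    ∑ n ∈ S, a n / n * (1 + (log n - x) ^ 2)⁻¹ ≤ C * exp 1 * (3 * (1 + (m : ℝ) ^ 2)⁻¹) := by
  have hnonneg (n : ℕ) : 0 ≤ a n / n := div_nonneg (ha n) n.cast_nonneg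
  have hlog (n : ℕ) (hn : n ∈ S) : m - 1 < log n - x ∧ log n - x ≤ m := by
    obtain ⟨-, h⟩ := hS n hn
    exact Int.ceil_eq_iff.1 h
  have hsub : S ⊆ logWindow (x + m - 1) (x + m) := fun n hn => by
    rw [mem_logWindow_iff_log (hS n hn).1]
    constructor <;> linarith [hlog n hn]
  calc ∑ n ∈ S, a n / n * (1 + (log n - x) ^ 2)⁻¹
      ≤ ∑ n ∈ S, a n / n * (3 * (1 + (m : ℝ) ^ 2)⁻¹) := by
        refine Finset.sum_le_sum fun n hn => mul_le_mul_of_nonneg_left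
          (inv_one_add_sq_le_of_abs_sub_le_one ?_) (hnonneg n)
        rw [abs_le]
        constructor <;> linarith [hlog n hn]
    _ = (∑ n ∈ S, a n / n) * (3 * (1 + (m : ℝ) ^ 2)⁻¹) := by rw [Finset.sum_mul]
    _ ≤ (∑ n ∈ logWindow (x + m - 1) (x + m), a n / n) * (3 * (1 + (m : ℝ) ^ 2)⁻¹) := by
        gcongr
        exact fun n _ _ => hnonneg n
    _ ≤ C * exp 1 * (3 * (1 + (m : ℝ) ^ 2)⁻¹) := by
        gcongr
        simpa only [sub_sub_cancel] using sum_logWindow_div_le ha hC (x + m - 1) (x + m)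

lemma sum_div_one_add_sq_le (ha : ∀ n, 0 ≤ a n)
    (hC : ∀ x, 0 ≤ x → ∑ n ∈ Finset.Ioc 0 ⌊x⌋₊, a n ≤ C * x) (x : ℝ) (S : Finset ℕ) :
    ∑ n ∈ S, a n / n * (1 + (log n - x) ^ 2)⁻¹ ≤
      C * exp 1 * (3 * ∑' m : ℤ, (1 + (m : ℝ) ^ 2)⁻¹) := by
  have hC0 : 0 ≤ C := by
    simpa using (Finset.sum_nonneg fun n _ => ha n).trans (hC 1 zero_le_one)
  let block : ℕ → ℤ := fun n => ⌈log n - x⌉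
  calc ∑ n ∈ S, a n / n * (1 + (log n - x) ^ 2)⁻¹
      = ∑ m ∈ (S.erase 0).image block, ∑ n ∈ S.erase 0 with block n = m,
          a n / n * (1 + (log n - x) ^ 2)⁻¹ := by
        rw [Finset.sum_fiberwise_of_maps_to fun n hn => Finset.mem_image_of_mem _ hn,
          Finset.sum_erase S (by simp)]
    _ ≤ ∑ m ∈ (S.erase 0).image block, C * exp 1 * (3 * (1 + (m : ℝ) ^ 2)⁻¹) :=
        Finset.sum_le_sum fun m _ => sum_div_one_add_sq_le_of_ceil_eq ha hC x m fun n hn => by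
          obtain ⟨hnS, hm⟩ := Finset.mem_filter.1 hn
          exact ⟨Nat.pos_of_ne_zero (Finset.ne_of_mem_erase hnS), hm⟩
    _ ≤ C * exp 1 * (3 * ∑' m : ℤ, (1 + (m : ℝ) ^ 2)⁻¹) := by
        rw [← Finset.mul_sum, ← Finset.mul_sum]
        gcongr
        exact summable_inv_one_add_sq_int.sum_le_tsum _ fun m _ => by positivity

lemma sum_mul_fejerKernel_le {B l δ : ℝ} (hl : 0 < l) (hδ : 0 < δ) (ha : ∀ n, 0 ≤ a n)
    {S : Finset ℕ} (hB : ∑ n ∈ S, a n / n * (1 + (log n - x) ^ 2)⁻¹ ≤ B) :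
    ∑ n ∈ S, a n / n * fejerKernel l (log n - x) ≤
      l * ∑ n ∈ logWindow (x - δ) (x + δ), a n / n + 4 / l * (1 + (δ ^ 2)⁻¹) * B := by
  have hnonneg (n : ℕ) : 0 ≤ a n / n := div_nonneg (ha n) n.cast_nonneg
  have hterm : ∀ n ∈ S, a n / n * fejerKernel l (log n - x) ≤
      l * (if n ∈ logWindow (x - δ) (x + δ) then a n / n else 0) +
        4 / l * (1 + (δ ^ 2)⁻¹) * (a n / n * (1 + (log n - x) ^ 2)⁻¹) := fun n _ => by
    split_ifs with hn
    · have hker := mul_le_mul_of_nonneg_left (fejerKernel_le (u := log n - x) hl.le) (hnonneg n)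
      have htail : 0 ≤ 4 / l * (1 + (δ ^ 2)⁻¹) * (a n / n * (1 + (log n - x) ^ 2)⁻¹) :=
        mul_nonneg (by positivity) (mul_nonneg (hnonneg n) (by positivity))
      linarith
    · rcases n.eq_zero_or_pos with rfl | hpos
      · simp
      have hfar : δ ≤ |log n - x| := by
        rw [mem_logWindow_iff_log hpos] at hn
        rw [le_abs]
        by_contra! h
        exact hn ⟨by linarith, by linarith⟩
      rw [mul_zero, zero_add, mul_left_comm]
      exact mul_le_mul_of_nonneg_left (fejerKernel_le_of_le_abs hl hδ hfar) (hnonneg n)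
  refine (Finset.sum_le_sum hterm).trans ?_
  rw [Finset.sum_add_distrib, ← Finset.mul_sum, ← Finset.mul_sum, Finset.sum_ite_mem]
  gcongr
  exacts [fun n _ _ => hnonneg n, Finset.inter_subset_right]

variable {G : ℂ → ℂ} {l : ℝ}

/-- The smoothed masses of `a` and of `1` differ by the smoothing of their difference, so an upper
bound for the former bounds the latter. -/
lemma sum_rpow_mul_fejerKernel_le {s U : ℝ} (hl : 0 < l) (hs : 1 < s) (ha : ∀ n, 0 ≤ a n)
    (hsum : ∀ z : ℂ, 1 < z.re → LSeriesHasSum (fun n => ((a n - 1 : ℝ) : ℂ)) z (G z))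
    (hU : ∀ S : Finset ℕ, ∑ n ∈ S, a n / n * fejerKernel l (log n - x) ≤ U) (V : Finset ℕ) :
    ∑ n ∈ V, (n : ℝ) ^ (-s) * fejerKernel l (log n - x) ≤ U - fejerSmoothing G l s x := by
  have hker (n : ℕ) : 0 ≤ fejerKernel l (log n - x) := fejerKernel_nonneg hl.le
  have hpow (n : ℕ) : (n : ℝ) ^ (-s) ≤ (n : ℝ)⁻¹ := by
    rcases n.eq_zero_or_pos with rfl | hn
    · simp [zero_rpow (by linarith : -s ≠ 0)]
    · rw [← rpow_neg_one]
      exact rpow_le_rpow_of_exponent_le (by exact_mod_cast hn) (by linarith)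
  rw [le_sub_comm]
  refine le_of_tendsto (hasSum_mul_fejerKernel hl hs hsum x)
    ((eventually_ge_atTop V).mono fun S hVS => ?_)
  have hV : ∑ n ∈ V, (n : ℝ) ^ (-s) * fejerKernel l (log n - x) ≤
      ∑ n ∈ S, (n : ℝ) ^ (-s) * fejerKernel l (log n - x) :=
    Finset.sum_le_sum_of_subset_of_nonneg hVS fun n _ _ => mul_nonneg (by positivity) (hker n)
  have hS : ∑ n ∈ S, a n * (n : ℝ) ^ (-s) * fejerKernel l (log n - x) ≤ U := by
    refine (Finset.sum_le_sum fun n _ => ?_).trans (hU S)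
    rw [div_eq_mul_inv]
    gcongr
    exacts [hker n, ha n, hpow n]
  simp only [sub_mul, one_mul, Finset.sum_sub_distrib]
  linarith

lemma sum_inv_mul_fejerKernel_le {U : ℝ} (hl : 0 < l) (hG : Continuous G) (ha : ∀ n, 0 ≤ a n)
    (hsum : ∀ z : ℂ, 1 < z.re → LSeriesHasSum (fun n => ((a n - 1 : ℝ) : ℂ)) z (G z))
    (hU : ∀ S : Finset ℕ, ∑ n ∈ S, a n / n * fejerKernel l (log n - x) ≤ U) (V : Finset ℕ) :
    ∑ n ∈ V, (n : ℝ)⁻¹ * fejerKernel l (log n - x) ≤ U - fejerSmoothing G l 1 x := by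
  have hpow (n : ℕ) : Tendsto (fun s : ℝ => (n : ℝ) ^ (-s)) (𝓝[>] 1) (𝓝 (n : ℝ)⁻¹) := by
    rw [← rpow_neg_one]
    exact ((continuousAt_const_rpow' (by norm_num)).tendsto.comp
      continuous_neg.continuousAt.tendsto).mono_left nhdsWithin_le_nhds
  refine le_of_tendsto_of_tendsto (b := 𝓝[>] (1 : ℝ))
    (tendsto_finsetSum _ fun n _ => (hpow n).mul_const _)
    (tendsto_const_nhds.sub (continuous_fejerSmoothing hG l x).continuousWithinAt)
    (eventually_mem_nhdsWithin.mono fun s hs => sum_rpow_mul_fejerKernel_le hl hs ha hsum hU V)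

lemma one_div_eight_sub_le_sum_inv_mul_fejerKernel (hl : 1 ≤ l) (x : ℝ) :
    1 / 8 - l * exp (-x) ≤
      ∑ n ∈ logWindow x (x + l⁻¹), (n : ℝ)⁻¹ * fejerKernel l (log n - x) := by
  have hl0 : 0 < l := zero_lt_one.trans_le hl
  have hinv : l⁻¹ ≤ 1 := inv_le_one_of_one_le₀ hl
  have hexp : exp (-l⁻¹) ≤ 1 - l⁻¹ / 2 := by
    rw [exp_neg, inv_le_comm₀ (exp_pos _) (by linarith)]
    refine (add_one_le_exp l⁻¹).trans' ?_
    rw [inv_le_iff_one_le_mul₀ (by linarith)]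
    nlinarith [inv_pos.2 hl0]
  have hmass := one_sub_exp_sub_exp_le_sum_inv (x := x) (y := x + l⁻¹) (by simp [hl0.le])
  have hmono : exp (-(x + l⁻¹)) ≤ exp (-x) := exp_le_exp.2 (by simp [hl0.le])
  rw [sub_add_cancel_left] at hmass
  calc 1 / 8 - l * exp (-x) ≤ l / 4 * (l⁻¹ / 2 - exp (-x)) := by
        have := mul_inv_cancel₀ hl0.ne'
        nlinarith [mul_pos hl0 (exp_pos (-x))]
    _ ≤ l / 4 * ∑ n ∈ logWindow x (x + l⁻¹), (n : ℝ)⁻¹ := by gcongr; linarith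
    _ = ∑ n ∈ logWindow x (x + l⁻¹), (n : ℝ)⁻¹ * (l / 4) := by rw [← Finset.sum_mul, mul_comm]
    _ ≤ ∑ n ∈ logWindow x (x + l⁻¹), (n : ℝ)⁻¹ * fejerKernel l (log n - x) := by
        refine Finset.sum_le_sum fun n hn => mul_le_mul_of_nonneg_left ?_ (by positivity)
        obtain ⟨h₁, h₂⟩ := (mem_logWindow_iff_log (pos_of_mem_logWindow hn)).1 hn
        refine div_four_le_fejerKernel hl0.le ?_
        rw [abs_of_pos (by linarith), ← mul_inv_cancel₀ hl0.ne']
        gcongr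
        linarith

lemma exists_pos_eventually_le_sum_logWindow_div (hG : Continuous G) (ha : ∀ n, 0 ≤ a n)
    (hC : ∀ x, 0 ≤ x → ∑ n ∈ Finset.Ioc 0 ⌊x⌋₊, a n ≤ C * x)
    (hsum : ∀ z : ℂ, 1 < z.re → LSeriesHasSum (fun n => ((a n - 1 : ℝ) : ℂ)) z (G z))
    {δ : ℝ} (hδ : 0 < δ) :
    ∃ c, 0 < c ∧ ∀ᶠ x in atTop, c ≤ ∑ n ∈ logWindow (x - δ) (x + δ), a n / n := by
  set B := C * exp 1 * (3 * ∑' m : ℤ, (1 + (m : ℝ) ^ 2)⁻¹)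
  have hB (x : ℝ) (S : Finset ℕ) := sum_div_one_add_sq_le ha hC x S
  have hB0 : 0 ≤ B := by simpa using hB 0 ∅
  set l := 1 + 32 * (4 * (1 + (δ ^ 2)⁻¹) * B) with hldef
  have hl : 1 ≤ l := le_add_of_nonneg_right (by positivity)
  have hl0 : 0 < l := zero_lt_one.trans_le hl
  have htail : 4 / l * (1 + (δ ^ 2)⁻¹) * B ≤ 1 / 32 := by
    rw [div_mul_eq_mul_div, div_mul_eq_mul_div, div_le_div_iff₀ hl0 (by norm_num)]
    linarith [hldef]
  have hexp : Tendsto (fun x => l * exp (-x)) atTop (𝓝 0) := by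
    simpa using tendsto_exp_neg_atTop_nhds_zero.const_mul l
  refine ⟨1 / 32 / l, by positivity, ?_⟩
  filter_upwards [hexp.eventually_le_const (by norm_num : (0 : ℝ) < 1 / 32),
    (tendsto_fejerSmoothing_atTop hG hl0.le 1).eventually_const_le
      (by norm_num : (-(1 / 32) : ℝ) < 0)] with x hx hsmooth
  rw [div_le_iff₀' hl0]
  have hlower := one_div_eight_sub_le_sum_inv_mul_fejerKernel hl x
  have hupper := sum_inv_mul_fejerKernel_le hl0 hG ha hsum
    (fun S => sum_mul_fejerKernel_le hl0 hδ ha (hB x S)) (logWindow x (x + l⁻¹))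
  linarith

/-- A weak form of the Wiener–Ikehara theorem: band-limiting at a fixed large `l` costs a constant
factor, which suffices for a lower bound of the correct order. -/
theorem exists_pos_eventually_mul_le_sum_Ioc (hG : ContinuousOn G {z | 1 ≤ z.re})
    (ha : ∀ n, 0 ≤ a n) (hC : ∀ x, 0 ≤ x → ∑ n ∈ Finset.Ioc 0 ⌊x⌋₊, a n ≤ C * x)
    (hsum : ∀ z : ℂ, 1 < z.re → LSeriesHasSum (fun n => ((a n - 1 : ℝ) : ℂ)) z (G z))
    {θ : ℝ} (hθ : 0 < θ) (hθ1 : θ < 1) :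
    ∃ c, 0 < c ∧ ∀ᶠ T : ℝ in atTop, c * T ≤ ∑ n ∈ Finset.Ioc ⌊θ * T⌋₊ ⌊T⌋₊, a n := by
  let G' : ℂ → ℂ := fun z => G (max z.re 1 + z.im * Complex.I)
  have hG' : Continuous G' := hG.comp_continuous (by fun_prop) fun z => by simp
  have hsum' (z : ℂ) (hz : 1 < z.re) :
      LSeriesHasSum (fun n => ((a n - 1 : ℝ) : ℂ)) z (G' z) := by
    simpa only [G', max_eq_left hz.le, Complex.re_add_im] using hsum z hz
  obtain ⟨c, hc, hev⟩ := exists_pos_eventually_le_sum_logWindow_div hG' ha hC hsum'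
    (δ := -log θ / 2) (by linarith [log_neg hθ hθ1])
  refine ⟨c * θ, by positivity, ?_⟩
  have hmid := tendsto_atTop_add_const_right atTop (log θ / 2) tendsto_log_atTop
  filter_upwards [hmid.eventually hev, eventually_gt_atTop 0] with T hT hT0
  have hwindow : logWindow (log T + log θ / 2 - -log θ / 2) (log T + log θ / 2 + -log θ / 2) =
      Finset.Ioc ⌊θ * T⌋₊ ⌊T⌋₊ := by
    rw [logWindow, show log T + log θ / 2 - -log θ / 2 = log (θ * T) by
      rw [log_mul hθ.ne' hT0.ne']; ring, show log T + log θ / 2 + -log θ / 2 = log T by ring,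
      exp_log (by positivity), exp_log hT0]
  rw [hwindow] at hT
  calc c * θ * T ≤ (∑ n ∈ Finset.Ioc ⌊θ * T⌋₊ ⌊T⌋₊, a n / n) * (θ * T) := by
        rw [mul_assoc]; gcongr
    _ = ∑ n ∈ Finset.Ioc ⌊θ * T⌋₊ ⌊T⌋₊, a n * (θ * T / n) := by
        rw [Finset.sum_mul]; exact Finset.sum_congr rfl fun n _ => by ring
    _ ≤ ∑ n ∈ Finset.Ioc ⌊θ * T⌋₊ ⌊T⌋₊, a n := Finset.sum_le_sum fun n hn =>
        mul_le_of_le_one_right (ha n) (div_le_one_of_le₀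
          ((Nat.floor_lt (by positivity)).1 (Finset.mem_Ioc.1 hn).1).le n.cast_nonneg)

end Tauberian

/-! ### Prime powers in long intervals -/

section PrimePowerLowerBound

lemma exists_continuousOn_LSeriesHasSum_vonMangoldt_sub_one :
    ∃ G : ℂ → ℂ, ContinuousOn G {z | 1 ≤ z.re} ∧
      ∀ z : ℂ, 1 < z.re → LSeriesHasSum (fun n => ((Λ n - 1 : ℝ) : ℂ)) z (G z) := by
  open ArithmeticFunction.vonMangoldt in
  refine ⟨fun z => LFunctionResidueClassAux (1 : ZMod 1) z - riemannZeta₀ z,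
    (continuousOn_LFunctionResidueClassAux 1).sub
      differentiable_riemannZeta₀.continuous.continuousOn, fun z hz => ?_⟩
  have hz1 : z ≠ 1 := by rintro rfl; simp at hz
  have hΛ := (ArithmeticFunction.LSeriesSummable_vonMangoldt hz).LSeriesHasSum
  have hone := (LSeriesSummable_one_iff.2 hz).LSeriesHasSum
  convert! hΛ.sub hone using 1
  · ext n; simp
  · have hres : (fun n => (residueClass (1 : ZMod 1) n : ℂ)) = fun n => (Λ n : ℂ) := by
      ext n
      simp [Subsingleton.elim (n : ZMod 1) 1]
    beta_reduce
    rw [eqOn_LFunctionResidueClassAux isUnit_one hz, LSeries_one_eq_riemannZeta hz,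
      riemannZeta_eq_inv_sub_add hz1, hres]
    simp only [Nat.totient_one, Nat.cast_one, inv_one, one_div]
    ring

theorem isBigO_card_primePow_Ioc {θ : ℝ} (hθ : 0 < θ) (hθ1 : θ < 1) :
    (fun T : ℝ => T / log T) =O[atTop]
      fun T => (#{n ∈ Finset.Ioc ⌊θ * T⌋₊ ⌊T⌋₊ | IsPrimePow n} : ℝ) := by
  obtain ⟨G, hG, hsum⟩ := exists_continuousOn_LSeriesHasSum_vonMangoldt_sub_one
  obtain ⟨c, hc, hev⟩ := exists_pos_eventually_mul_le_sum_Ioc hG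
    (fun _ => ArithmeticFunction.vonMangoldt_nonneg)
    (fun _ hx => Chebyshev.psi_le_const_mul_self hx) hsum hθ hθ1
  refine IsBigO.of_bound c⁻¹ ?_
  filter_upwards [hev, eventually_gt_atTop 1] with T hT hT1
  have hlog : 0 < log T := log_pos hT1
  have hcard : c * T ≤ #{n ∈ Finset.Ioc ⌊θ * T⌋₊ ⌊T⌋₊ | IsPrimePow n} * log T := by
    refine hT.trans ?_
    rw [← nsmul_eq_mul, ← Finset.sum_const, Finset.sum_filter]
    refine Finset.sum_le_sum fun n hn => ?_
    split_ifs with hpow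
    · have hnT : (n : ℝ) ≤ T := (Nat.le_floor_iff (by linarith)).1 (Finset.mem_Ioc.1 hn).2
      exact ArithmeticFunction.vonMangoldt_le_log.trans
        (log_le_log (by exact_mod_cast hpow.pos) hnT)
    · rw [ArithmeticFunction.vonMangoldt_apply, if_neg hpow]
  rw [norm_of_nonneg (by positivity), norm_of_nonneg (by positivity), ← div_eq_inv_mul,
    div_le_div_iff₀ hlog hc]
  linarith

end PrimePowerLowerBound

/-! ### Brun's pure sieve -/

section BrunSieve

variable {α ι : Type*}

lemma sum_powerset_card_le_neg_one_pow (S : Finset ι) (m : ℕ) :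
    ∑ T ∈ S.powerset with #T ≤ m, (-1 : ℤ) ^ #T =
      ∑ j ∈ Finset.range (m + 1), (-1) ^ j * ((#S).choose j : ℤ) := by
  rw [← Finset.sum_fiberwise_of_maps_to (g := Finset.card) (t := Finset.range (m + 1))
    fun T hT => Finset.mem_range_succ_iff.2 (Finset.mem_filter.1 hT).2]
  refine Finset.sum_congr rfl fun j hj => ?_
  have hfiber : {T ∈ {T ∈ S.powerset | #T ≤ m} | #T = j} = S.powersetCard j := by
    ext T
    simp only [Finset.mem_filter, Finset.mem_powerset, Finset.mem_powersetCard]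
    have := Finset.mem_range_succ_iff.1 hj
    constructor
    · rintro ⟨⟨h, -⟩, hcard⟩; exact ⟨h, hcard⟩
    · rintro ⟨h, rfl⟩; exact ⟨⟨h, this⟩, rfl⟩
  rw [hfiber, Finset.sum_congr rfl fun T hT => by rw [(Finset.mem_powersetCard.1 hT).2],
    Finset.sum_const, Finset.card_powersetCard, nsmul_eq_mul, mul_comm]

lemma bonferroni_even [DecidableEq ι] (S : Finset ι) (k : ℕ) :
    (if S = ∅ then 1 else 0) ≤ ∑ T ∈ S.powerset with #T ≤ 2 * k, (-1 : ℤ) ^ #T := by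
  rw [sum_powerset_card_le_neg_one_pow]
  split_ifs with h
  · subst h
    rw [Finset.sum_range_succ', Finset.sum_eq_zero fun j _ => by simp]
    simp
  · obtain ⟨m, hm⟩ := Nat.exists_eq_succ_of_ne_zero (Finset.card_ne_zero.2
      (Finset.nonempty_iff_ne_empty.2 h))
    rw [hm, Nat.succ_eq_add_one, Int.alternating_sum_range_choose_eq_choose, pow_mul]
    simp

lemma card_filter_forall_not_le (A : Finset α) (P : Finset ι) (E : ι → α → Prop)
    [∀ i, DecidablePred (E i)] (k : ℕ) :
    (#{n ∈ A | ∀ i ∈ P, ¬E i n} : ℤ) ≤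
      ∑ T ∈ P.powerset with #T ≤ 2 * k, (-1) ^ #T * (#{n ∈ A | ∀ i ∈ T, E i n} : ℤ) := by
  classical
  have hsum (n : α) : ∑ T ∈ {i ∈ P | E i n}.powerset with #T ≤ 2 * k, (-1 : ℤ) ^ #T =
      ∑ T ∈ P.powerset with #T ≤ 2 * k, if ∀ i ∈ T, E i n then (-1) ^ #T else 0 := by
    rw [← Finset.sum_filter]
    congr 1
    ext T
    simp only [Finset.mem_filter, Finset.mem_powerset, Finset.subset_iff]
    grind
  calc (#{n ∈ A | ∀ i ∈ P, ¬E i n} : ℤ)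
      = ∑ n ∈ A, if {i ∈ P | E i n} = ∅ then 1 else 0 := by
        simp only [Finset.filter_eq_empty_iff, Finset.sum_boole]
    _ ≤ ∑ n ∈ A, ∑ T ∈ P.powerset with #T ≤ 2 * k, if ∀ i ∈ T, E i n then (-1) ^ #T else 0 :=
        Finset.sum_le_sum fun n _ => (bonferroni_even _ k).trans_eq (hsum n)
    _ = _ := by
        rw [Finset.sum_comm]
        refine Finset.sum_congr rfl fun T _ => ?_
        rw [← Finset.sum_filter, Finset.sum_const, nsmul_eq_mul, mul_comm]

variable {P : Finset ι} {g : ι → ℝ}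

lemma sum_powerset_lt_card_prod_le (hg : ∀ i ∈ P, 0 ≤ g i) (m : ℕ) :
    ∑ T ∈ P.powerset with ¬#T ≤ m, ∏ i ∈ T, g i ≤ exp (exp 1 * ∑ i ∈ P, g i - m) := by
  have hterm : ∀ T ∈ {T ∈ P.powerset | ¬#T ≤ m},
      ∏ i ∈ T, g i ≤ exp (-m) * ∏ i ∈ T, (exp 1 * g i) := fun T hT => by
    obtain ⟨hTP, hcard⟩ := Finset.mem_filter.1 hT
    have hcard' : (m : ℝ) ≤ #T := by exact_mod_cast (not_le.1 hcard).le
    rw [Finset.prod_mul_distrib, Finset.prod_const, exp_one_pow, ← mul_assoc, ← exp_add]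
    exact le_mul_of_one_le_left
      (Finset.prod_nonneg fun i hi => hg i (Finset.mem_powerset.1 hTP hi))
      (one_le_exp (by linarith))
  calc ∑ T ∈ P.powerset with ¬#T ≤ m, ∏ i ∈ T, g i
      ≤ ∑ T ∈ P.powerset with ¬#T ≤ m, exp (-m) * ∏ i ∈ T, (exp 1 * g i) :=
        Finset.sum_le_sum hterm
    _ ≤ ∑ T ∈ P.powerset, exp (-m) * ∏ i ∈ T, (exp 1 * g i) :=
        Finset.sum_le_sum_of_subset_of_nonneg (Finset.filter_subset _ _) fun T hT _ =>
          mul_nonneg (exp_pos _).le (Finset.prod_nonneg fun i hi =>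
            mul_nonneg (exp_pos _).le (hg i (Finset.mem_powerset.1 hT hi)))
    _ = exp (-m) * ∏ i ∈ P, (1 + exp 1 * g i) := by rw [← Finset.mul_sum, Finset.prod_one_add]
    _ ≤ exp (-m) * ∏ i ∈ P, exp (exp 1 * g i) := by
        gcongr with i
        · exact fun i hi => add_nonneg zero_le_one (mul_nonneg (exp_pos _).le (hg i hi))
        · rw [add_comm]; exact add_one_le_exp _
    _ = exp (exp 1 * ∑ i ∈ P, g i - m) := by
        rw [← exp_sum, ← exp_add, Finset.mul_sum, neg_add_eq_sub]

lemma sum_powerset_card_le_prod_neg_le (hg : ∀ i ∈ P, 0 ≤ g i) (hg1 : ∀ i ∈ P, g i ≤ 1) (m : ℕ) :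
    ∑ T ∈ P.powerset with #T ≤ m, ∏ i ∈ T, -g i ≤
      exp (-∑ i ∈ P, g i) + exp (exp 1 * ∑ i ∈ P, g i - m) := by
  have hall : ∑ T ∈ P.powerset, ∏ i ∈ T, -g i ≤ exp (-∑ i ∈ P, g i) := by
    rw [← Finset.prod_one_add, ← Finset.sum_neg_distrib, exp_sum]
    refine Finset.prod_le_prod (fun i hi => by linarith [hg1 i hi]) fun i _ => ?_
    rw [add_comm]
    exact add_one_le_exp _
  have hlarge : -∑ T ∈ P.powerset with ¬#T ≤ m, ∏ i ∈ T, -g i ≤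
      ∑ T ∈ P.powerset with ¬#T ≤ m, ∏ i ∈ T, g i := by
    rw [← Finset.sum_neg_distrib]
    refine Finset.sum_le_sum fun T hT => ?_
    have hTP := Finset.mem_powerset.1 (Finset.mem_filter.1 hT).1
    refine (neg_le_abs _).trans_eq ?_
    rw [Finset.abs_prod]
    exact Finset.prod_congr rfl fun i hi => by rw [abs_neg, abs_of_nonneg (hg i (hTP hi))]
  linarith [Finset.sum_filter_add_sum_filter_not P.powerset (fun T => #T ≤ m)
    fun T => ∏ i ∈ T, -g i, sum_powerset_lt_card_prod_le hg m]

lemma sum_powerset_card_le_pow_card_le {ρ Y : ℝ} (hρ : 0 ≤ ρ) (hY : 1 ≤ Y) (hPY : ρ * #P ≤ Y)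
    (m : ℕ) : ∑ T ∈ P.powerset with #T ≤ m, ρ ^ #T ≤ exp 1 * Y ^ m := by
  have hY0 : 0 < Y := zero_lt_one.trans_le hY
  have hterm : ∀ T ∈ {T ∈ P.powerset | #T ≤ m}, ρ ^ #T ≤ Y ^ m * ∏ _i ∈ T, (ρ / Y) :=
    fun T hT => by
    rw [Finset.prod_const, div_pow, mul_div_assoc', le_div_iff₀ (by positivity), mul_comm]
    gcongr
    exact (Finset.mem_filter.1 hT).2
  calc ∑ T ∈ P.powerset with #T ≤ m, ρ ^ #T
      ≤ ∑ T ∈ P.powerset with #T ≤ m, Y ^ m * ∏ _i ∈ T, (ρ / Y) := Finset.sum_le_sum hterm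
    _ ≤ ∑ T ∈ P.powerset, Y ^ m * ∏ _i ∈ T, (ρ / Y) :=
        Finset.sum_le_sum_of_subset_of_nonneg (Finset.filter_subset _ _) fun T _ _ => by positivity
    _ = Y ^ m * ∏ _i ∈ P, (1 + ρ / Y) := by rw [← Finset.mul_sum, Finset.prod_one_add]
    _ ≤ Y ^ m * exp (∑ _i ∈ P, ρ / Y) := by
        gcongr
        exact prod_one_add_le_exp_sum P fun _ => by positivity
    _ ≤ Y ^ m * exp 1 := by
        gcongr
        rwa [Finset.sum_const, nsmul_eq_mul, mul_div_assoc', div_le_one hY0, mul_comm]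
    _ = exp 1 * Y ^ m := mul_comm _ _

theorem brun_pure_sieve (A : Finset α) (E : ι → α → Prop) [∀ i, DecidablePred (E i)] {X ρ Y : ℝ}
    (hX : 0 ≤ X) (hρ : 0 ≤ ρ) (hY : 1 ≤ Y) (hPY : ρ * #P ≤ Y)
    (hg : ∀ i ∈ P, 0 ≤ g i) (hg1 : ∀ i ∈ P, g i ≤ 1)
    (hcount : ∀ T ⊆ P, |(#{n ∈ A | ∀ i ∈ T, E i n} : ℝ) - X * ∏ i ∈ T, g i| ≤ ρ ^ #T) (k : ℕ) :
    (#{n ∈ A | ∀ i ∈ P, ¬E i n} : ℝ) ≤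
      X * (exp (-∑ i ∈ P, g i) + exp (exp 1 * ∑ i ∈ P, g i - 2 * k)) + exp 1 * Y ^ (2 * k) := by
  have hbonferroni : (#{n ∈ A | ∀ i ∈ P, ¬E i n} : ℝ) ≤
      ∑ T ∈ P.powerset with #T ≤ 2 * k, (-1) ^ #T * (#{n ∈ A | ∀ i ∈ T, E i n} : ℝ) := by
    exact_mod_cast card_filter_forall_not_le A P E k
  calc (#{n ∈ A | ∀ i ∈ P, ¬E i n} : ℝ)
      ≤ ∑ T ∈ P.powerset with #T ≤ 2 * k, (X * ∏ i ∈ T, -g i + ρ ^ #T) := by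
        refine hbonferroni.trans (Finset.sum_le_sum fun T hT => ?_)
        have hT := abs_le.1 (hcount T (Finset.mem_powerset.1 (Finset.mem_filter.1 hT).1))
        rw [Finset.prod_neg]
        rcases neg_one_pow_eq_or ℝ #T with h | h <;> rw [h] <;> linarith
    _ = X * ∑ T ∈ P.powerset with #T ≤ 2 * k, ∏ i ∈ T, -g i +
          ∑ T ∈ P.powerset with #T ≤ 2 * k, ρ ^ #T := by
        rw [Finset.sum_add_distrib, Finset.mul_sum]
    _ ≤ _ := by
        gcongr
        · exact_mod_cast sum_powerset_card_le_prod_neg_le hg hg1 (2 * k)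
        · exact sum_powerset_card_le_pow_card_le hρ hY hPY (2 * k)

end BrunSieve

/-! ### Counting by residue classes -/

section ResidueClasses

lemma abs_card_range_filter_modEq_sub_le {d : ℕ} (hd : d ≠ 0) (N r : ℕ) :
    |(#{n ∈ Finset.range N | n ≡ r [MOD d]} : ℝ) - N / d| ≤ 1 := by
  rw [← Nat.count_eq_card_filter_range, Nat.count_modEq_card _ (Nat.pos_of_ne_zero hd)]
  have hlower : (N : ℝ) / d < ((N / d : ℕ) : ℝ) + 1 := by
    rw [← Nat.floor_div_eq_div (K := ℝ)]
    exact Nat.lt_floor_add_one _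
  have hupper : ((N / d : ℕ) : ℝ) ≤ N / d := Nat.cast_div_le
  rw [abs_le]
  split_ifs <;> push_cast <;> constructor <;> linarith

variable {T : Finset ℕ}

lemma forall_modEq_iff_modEq_prod (hT : (T : Set ℕ).Pairwise Nat.Coprime)
    {n r : ℕ} : (∀ d ∈ T, n ≡ r [MOD d]) ↔ n ≡ r [MOD ∏ d ∈ T, d] := by
  refine ⟨fun h => ?_, fun h d hd => h.of_dvd (Finset.dvd_prod_of_mem _ hd)⟩
  rw [Nat.modEq_iff_dvd, Nat.cast_prod]
  exact Finset.prod_dvd_of_coprime (fun d hd e he hde => Nat.isCoprime_iff_coprime.2 (hT hd he hde))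
    fun d hd => Nat.modEq_iff_dvd.1 (h d hd)

lemma exists_forall_natCast_eq_iff_modEq_prod (hT : (T : Set ℕ).Pairwise Nat.Coprime)
    (hT0 : ∀ d ∈ T, d ≠ 0) (φ : ∀ d ∈ T, ZMod d) :
    ∃ r : ℕ, ∀ n : ℕ, (∀ d (hd : d ∈ T), (n : ZMod d) = φ d hd) ↔ n ≡ r [MOD ∏ d ∈ T, d] := by
  obtain ⟨r, hr⟩ := Nat.chineseRemainderOfFinset
    (fun d => if hd : d ∈ T then (φ d hd).val else 0) id T hT0 hT
  have hrφ (d) (hd : d ∈ T) : φ d hd = (r : ZMod d) := by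
    have : NeZero d := ⟨hT0 d hd⟩
    have hrd := (ZMod.natCast_eq_natCast_iff _ _ _).2 (hr d hd)
    rw [dif_pos hd, id] at hrd
    rw [hrd, ZMod.natCast_rightInverse]
  refine ⟨r, fun n => ?_⟩
  rw [← forall_modEq_iff_modEq_prod hT]
  exact forall₂_congr fun d hd => by rw [hrφ d hd, ZMod.natCast_eq_natCast_iff]

lemma abs_card_range_filter_natCast_mem_sub_le (hT : (T : Set ℕ).Pairwise Nat.Coprime)
    (hT0 : ∀ d ∈ T, d ≠ 0) (Ω : ∀ d, Finset (ZMod d)) (N : ℕ) :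
    |(#{n ∈ Finset.range N | ∀ d ∈ T, (n : ZMod d) ∈ Ω d} : ℝ) - N * ∏ d ∈ T, (#(Ω d) / d : ℝ)| ≤
      ∏ d ∈ T, (#(Ω d) : ℝ) := by
  classical
  have hfiber (φ) (hφ : φ ∈ T.pi Ω) :
      |(#{n ∈ {n ∈ Finset.range N | ∀ d ∈ T, (n : ZMod d) ∈ Ω d} |
        (fun d (_ : d ∈ T) => (n : ZMod d)) = φ} : ℝ) - N / ↑(∏ d ∈ T, d)| ≤ 1 := by
    obtain ⟨r, hr⟩ := exists_forall_natCast_eq_iff_modEq_prod hT hT0 φ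
    convert abs_card_range_filter_modEq_sub_le (Finset.prod_ne_zero_iff.2 hT0) N r using 5
    ext n
    simp only [Finset.mem_filter, ← hr, and_assoc, funext_iff]
    refine and_congr_right fun _ => and_iff_right_of_imp fun h d hd => ?_
    rw [h d hd]
    exact Finset.mem_pi.1 hφ d hd
  have hmaps : ∀ n ∈ {n ∈ Finset.range N | ∀ d ∈ T, (n : ZMod d) ∈ Ω d},
      (fun d (_ : d ∈ T) => (n : ZMod d)) ∈ T.pi Ω :=
    fun n hn => Finset.mem_pi.2 (Finset.mem_filter.1 hn).2
  have hcard : ∏ d ∈ T, (#(Ω d) : ℝ) = #(T.pi Ω) := by rw [Finset.card_pi, Nat.cast_prod]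
  rw [Finset.card_eq_sum_card_fiberwise hmaps, Finset.prod_div_distrib, hcard, ← Nat.cast_prod,
    mul_div_left_comm, ← nsmul_eq_mul, ← Finset.sum_const, Nat.cast_sum, ← Finset.sum_sub_distrib]
  refine (Finset.abs_sum_le_sum_abs _ _).trans ((Finset.sum_le_card_nsmul _ _ 1 hfiber).trans_eq ?_)
  rw [nsmul_eq_mul, mul_one]

end ResidueClasses

/-! ### Prime pairs with a fixed difference -/

section PrimePairs

lemma prime_dvd_mul_add_iff {p : ℕ} (hp : p.Prime) (n h : ℕ) :
    p ∣ n * (n + h) ↔ (n : ZMod p) ∈ ({0, -(h : ZMod p)} : Finset (ZMod p)) := by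
  rw [hp.dvd_mul, Finset.mem_insert, Finset.mem_singleton, eq_neg_iff_add_eq_zero, ← Nat.cast_add,
    ZMod.natCast_eq_zero_iff, ZMod.natCast_eq_zero_iff]

lemma card_range_filter_forall_not_dvd_mul_add_le {P : Finset ℕ} {h : ℕ} (hP : ∀ p ∈ P, p.Prime)
    (hPh : ∀ p ∈ P, ¬p ∣ h) {Y : ℝ} (hY : 1 ≤ Y) (hPY : 2 * #P ≤ Y) (N k : ℕ) :
    (#{n ∈ Finset.range N | ∀ p ∈ P, ¬p ∣ n * (n + h)} : ℝ) ≤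
      N * (exp (-∑ p ∈ P, 2 / (p : ℝ)) + exp (exp 1 * ∑ p ∈ P, 2 / (p : ℝ) - 2 * k)) +
        exp 1 * Y ^ (2 * k) := by
  refine brun_pure_sieve _ (fun p n => p ∣ n * (n + h)) N.cast_nonneg zero_le_two hY hPY
    (fun p _ => by positivity) (fun p hp => ?_) (fun T hTP => ?_) k
  · exact div_le_one_of_le₀ (by exact_mod_cast (hP p hp).two_le) p.cast_nonneg
  · let Ω (p : ℕ) : Finset (ZMod p) := {0, -(h : ZMod p)}
    have hΩ (p) (hp : p ∈ T) : (#(Ω p) : ℝ) = 2 := by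
      rw [Finset.card_pair, Nat.cast_ofNat]
      rw [ne_comm, neg_ne_zero, Ne, ZMod.natCast_eq_zero_iff]
      exact hPh p (hTP hp)
    have hcoprime : (T : Set ℕ).Pairwise Nat.Coprime := fun p hp q hq hpq =>
      (Nat.coprime_primes (hP p (hTP hp)) (hP q (hTP hq))).2 hpq
    have hcount := abs_card_range_filter_natCast_mem_sub_le hcoprime
      (fun p hp => (hP p (hTP hp)).ne_zero) Ω N
    rw [Finset.prod_congr rfl hΩ, Finset.prod_congr rfl fun p hp => by rw [hΩ p hp],
      Finset.prod_const] at hcount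
    convert hcount using 7 with n _ p
    exact imp_congr_right fun hp => prime_dvd_mul_add_iff (hP p (hTP hp)) n h

lemma log_le_prod_primesBelow (M : ℕ) :
    log M ≤ ∏ p ∈ M.primesBelow, (1 - (p : ℝ)⁻¹)⁻¹ := by
  rcases M.eq_zero_or_pos with rfl | hM
  · simp
  let inv : ℕ →* ℝ := (invMonoidWithZeroHom (G₀ := ℝ)).toMonoidHom.comp (Nat.castRingHom ℝ)
  have hprod := (EulerProduct.summable_and_hasSum_smoothNumbers_prod_primesBelow_geometric
    (f := inv) (fun {p} hp => by
      change ‖(p : ℝ)⁻¹‖ < 1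
      rw [norm_inv, norm_natCast]
      exact inv_lt_one_of_one_lt₀ (mod_cast hp.one_lt)) M).2
  have hsmooth : ∀ n ∈ Finset.Icc 1 (M - 1), n ∈ M.smoothNumbers := fun n hn => by
    rw [Finset.mem_Icc] at hn
    exact Nat.mem_smoothNumbers_of_lt (by lia) (by lia)
  calc log M ≤ ∑ n ∈ Finset.Icc 1 (M - 1), (n : ℝ)⁻¹ := by
        have := log_add_one_le_harmonic (M - 1)
        rw [harmonic_eq_sum_Icc] at this
        push_cast [Nat.sub_add_cancel hM] at this
        exact this
    _ = ∑ n ∈ Finset.Icc 1 (M - 1), M.smoothNumbers.indicator inv n :=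
        Finset.sum_congr rfl fun n hn => (Set.indicator_of_mem (hsmooth n hn) inv).symm
    _ ≤ ∏ p ∈ M.primesBelow, (1 - (p : ℝ)⁻¹)⁻¹ :=
        sum_le_hasSum _ (fun n _ => Set.indicator_nonneg (fun n _ => inv_nonneg.2 n.cast_nonneg) n)
          (hasSum_subtype_iff_indicator.1 hprod)

lemma log_one_sub_inv_le {t : ℝ} (ht : t ≤ 1 / 2) : log (1 - t)⁻¹ ≤ t + 2 * t ^ 2 := by
  have hpos : 0 < 1 - t := by linarith
  refine (log_le_sub_one_of_pos (inv_pos.2 hpos)).trans ?_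
  rw [sub_le_iff_le_add, inv_le_iff_one_le_mul₀ hpos]
  nlinarith [mul_nonneg (sq_nonneg t) (by linarith : 0 ≤ 1 - 2 * t)]

lemma log_log_le_sum_primesBelow {M : ℕ} (hM : 2 ≤ M) :
    log (log M) ≤ ∑ p ∈ M.primesBelow, (p : ℝ)⁻¹ + 2 * ∑' n : ℕ, ((n : ℝ) ^ 2)⁻¹ := by
  have hinv : ∀ p ∈ M.primesBelow, (p : ℝ)⁻¹ ≤ 1 / 2 := fun p hp => by
    rw [inv_eq_one_div]
    exact one_div_le_one_div_of_le two_pos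
      (mod_cast (Nat.prime_of_mem_primesBelow hp).two_le)
  have hsquares : ∑ p ∈ M.primesBelow, ((p : ℝ) ^ 2)⁻¹ ≤ ∑' n : ℕ, ((n : ℝ) ^ 2)⁻¹ :=
    (summable_nat_pow_inv.2 one_lt_two).sum_le_tsum _ fun n _ => by positivity
  calc log (log M) ≤ log (∏ p ∈ M.primesBelow, (1 - (p : ℝ)⁻¹)⁻¹) :=
        log_le_log (log_pos (mod_cast hM)) (log_le_prod_primesBelow M)
    _ = ∑ p ∈ M.primesBelow, log (1 - (p : ℝ)⁻¹)⁻¹ :=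
        log_prod fun p hp => inv_ne_zero (by linarith [hinv p hp])
    _ ≤ ∑ p ∈ M.primesBelow, ((p : ℝ)⁻¹ + 2 * ((p : ℝ)⁻¹) ^ 2) :=
        Finset.sum_le_sum fun p hp => log_one_sub_inv_le (hinv p hp)
    _ ≤ _ := by
        simp only [Finset.sum_add_distrib, ← Finset.mul_sum, inv_pow]
        gcongr

lemma exists_log_log_sub_le_sum_primesBelow_not_dvd {h : ℕ} (hh : h ≠ 0) :
    ∃ C : ℝ, ∀ M : ℕ, 2 ≤ M →
      log (log M) - C ≤ ∑ p ∈ M.primesBelow with ¬p ∣ h, (p : ℝ)⁻¹ := by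
  refine ⟨2 * ∑' n : ℕ, ((n : ℝ) ^ 2)⁻¹ + ∑ d ∈ h.divisors, (d : ℝ)⁻¹, fun M hM => ?_⟩
  have hdvd : ∑ p ∈ M.primesBelow with p ∣ h, (p : ℝ)⁻¹ ≤ ∑ d ∈ h.divisors, (d : ℝ)⁻¹ :=
    Finset.sum_le_sum_of_subset_of_nonneg
      (fun p hp => Nat.mem_divisors.2 ⟨(Finset.mem_filter.1 hp).2, hh⟩) fun d _ _ => by positivity
  linarith [log_log_le_sum_primesBelow hM,
    Finset.sum_filter_add_sum_filter_not M.primesBelow (· ∣ h) fun p => (p : ℝ)⁻¹]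

lemma exists_subset_sum_mem_Icc {ι : Type*} {s : Finset ι} {g : ι → ℝ} {t : ℝ}
    (hg : ∀ i ∈ s, g i ≤ 1) (ht : 0 ≤ t) (hts : t ≤ ∑ i ∈ s, g i) :
    ∃ u ⊆ s, ∑ i ∈ u, g i ∈ Icc t (t + 1) := by
  classical
  induction s using Finset.induction_on with
  | empty => exact ⟨∅, subset_rfl, hts, by simpa using by linarith⟩
  | insert i s hi ih =>
    by_cases hs : t ≤ ∑ i ∈ s, g i
    · obtain ⟨u, hu, hsum⟩ := ih (fun j hj => hg j (Finset.mem_insert_of_mem hj)) hs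
      exact ⟨u, hu.trans (Finset.subset_insert i s), hsum⟩
    · refine ⟨insert i s, subset_rfl, hts, ?_⟩
      rw [Finset.sum_insert hi]
      linarith [hg i (Finset.mem_insert_self i s)]

lemma eventually_le_sum_primesBelow_not_dvd {h : ℕ} (hh : h ≠ 0) :
    ∀ᶠ L : ℝ in atTop, 3 / 2 * log L ≤
      ∑ p ∈ ⌊exp (L ^ (9 / 10 : ℝ))⌋₊.primesBelow with ¬p ∣ h, 2 / (p : ℝ) := by
  obtain ⟨C, hC⟩ := exists_log_log_sub_le_sum_primesBelow_not_dvd hh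
  have hrpow : ∀ᶠ L : ℝ in atTop, 2 ≤ L ^ (9 / 10 : ℝ) :=
    (tendsto_rpow_atTop (by norm_num)).eventually_ge_atTop 2
  have hconst : ∀ᶠ L : ℝ in atTop, 20 / 3 * (C + log 2) ≤ log L :=
    tendsto_log_atTop.eventually_ge_atTop _
  filter_upwards [hrpow, hconst, eventually_gt_atTop 0] with L hrpow hconst hL
  set u := L ^ (9 / 10 : ℝ)
  have hexp : u + 1 ≤ exp u := add_one_le_exp u
  have hM : 2 ≤ ⌊exp u⌋₊ := Nat.le_floor (by push_cast; linarith)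
  have hlogM : u / 2 ≤ log ⌊exp u⌋₊ := by
    have hlog := log_le_log (by positivity)
      (show exp u / 2 ≤ ⌊exp u⌋₊ by linarith [Nat.lt_floor_add_one (exp u)])
    rw [log_div (exp_ne_zero u) two_ne_zero, log_exp] at hlog
    linarith [log_two_lt_d9]
  have hloglog := log_le_log (by positivity) hlogM
  have hlogu : log u = 9 / 10 * log L := log_rpow hL _
  rw [log_div (by positivity) two_ne_zero, hlogu] at hloglog
  simp_rw [div_eq_mul_inv (2 : ℝ), ← Finset.mul_sum]
  linarith [hC _ hM]

/-- With `L = log N`, the sieving primes below `exp (L ^ (9 / 10))` carry total density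
`(9 / 5) * log L + O(1)`. Trimming it to `(3 / 2) * log L + O(1)` still gives the saving
`L ^ (-3 / 2) = o(1 / L)`, while inclusion–exclusion up to depth `2 * k` with `k ≈ 3 * log L`
suffices because `exp 1 * (3 / 2) < 6`; its error term `exp (O(L ^ (9 / 10) * log L))` is below
`√N`. -/
lemma eventually_exists_sieving_primes {h : ℕ} (hh : h ≠ 0) :
    ∀ᶠ L : ℝ in atTop, ∃ P ⊆ ⌊exp (L ^ (9 / 10 : ℝ))⌋₊.primesBelow,
      (∀ p ∈ P, ¬p ∣ h) ∧ ∑ p ∈ P, 2 / (p : ℝ) ∈ Icc (3 / 2 * log L) (3 / 2 * log L + 1) := by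
  filter_upwards [eventually_le_sum_primesBelow_not_dvd hh, eventually_ge_atTop 1] with L hL hL1
  have hlog : 0 ≤ log L := log_nonneg hL1
  obtain ⟨P, hP, hsum⟩ := exists_subset_sum_mem_Icc (fun p hp => div_le_one_of_le₀
    (mod_cast (Nat.prime_of_mem_primesBelow (Finset.mem_filter.1 hp).1).two_le) p.cast_nonneg)
    (by positivity) hL
  exact ⟨P, hP.trans (Finset.filter_subset _ _), fun p hp => (Finset.mem_filter.1 (hP hp)).2, hsum⟩

lemma eventually_two_mul_exp_rpow_pow_le :
    ∀ᶠ L : ℝ in atTop,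
      (2 * exp (L ^ (9 / 10 : ℝ))) ^ (2 * (⌈3 * log L⌉₊ + 2)) ≤ exp (L / 2) := by
  have hrpow : Tendsto (fun L : ℝ => L ^ (1 / 10 : ℝ)) atTop atTop :=
    tendsto_rpow_atTop (by norm_num)
  have hdepth : (fun L => 6 * log L + 6) =o[atTop] fun L : ℝ => L ^ (1 / 10 : ℝ) :=
    ((isLittleO_log_rpow_atTop (by norm_num)).const_mul_left 6).add
      (isLittleO_const_left.2 (.inr (tendsto_norm_atTop_atTop.comp hrpow)))
  have hlevel : (fun L : ℝ => 1 + L ^ (9 / 10 : ℝ)) =O[atTop] fun L => L ^ (9 / 10 : ℝ) :=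
    (isLittleO_const_left.2 (.inr (tendsto_norm_atTop_atTop.comp
      (tendsto_rpow_atTop (by norm_num))))).isBigO.add (isBigO_refl _ _)
  filter_upwards [(hdepth.mul_isBigO hlevel).bound one_half_pos, eventually_ge_atTop 1]
    with L hbound hL
  have hlog : 0 ≤ log L := log_nonneg hL
  rw [norm_of_nonneg (by positivity), norm_of_nonneg (by positivity),
    ← rpow_add (by positivity)] at hbound
  rw [show (1 / 10 + 9 / 10 : ℝ) = 1 by norm_num, rpow_one] at hbound
  set u := L ^ (9 / 10 : ℝ)
  have hbase : 2 * exp u ≤ exp (1 + u) := by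
    rw [exp_add]
    gcongr
    linarith [add_one_le_exp (1 : ℝ)]
  have hceil : (⌈3 * log L⌉₊ : ℝ) < 3 * log L + 1 := Nat.ceil_lt_add_one (by positivity)
  calc (2 * exp u) ^ (2 * (⌈3 * log L⌉₊ + 2)) ≤ exp (1 + u) ^ (2 * (⌈3 * log L⌉₊ + 2)) := by gcongr
    _ = exp (2 * (⌈3 * log L⌉₊ + 2) * (1 + u)) := by rw [← exp_nat_mul]; push_cast; rfl
    _ ≤ exp ((6 * log L + 6) * (1 + u)) := by gcongr; linarith
    _ ≤ exp (L / 2) := by gcongr; linarith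

lemma card_range_filter_prime_pair_le {P : Finset ℕ} {M : ℕ} (hP : P ⊆ M.primesBelow) (h N : ℕ) :
    #{n ∈ Finset.range N | n.Prime ∧ (n + h).Prime} ≤
      #{n ∈ Finset.range N | ∀ p ∈ P, ¬p ∣ n * (n + h)} + M := by
  conv_rhs => rw [← Finset.card_range M]
  refine (Finset.card_le_card fun n hn => ?_).trans (Finset.card_union_le _ _)
  obtain ⟨hnN, hn, hnh⟩ := Finset.mem_filter.1 hn
  rw [Finset.mem_union, or_iff_not_imp_right, Finset.mem_range, not_lt]
  refine fun hMn => Finset.mem_filter.2 ⟨hnN, fun p hp hdvd => ?_⟩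
  obtain ⟨hpM, hp⟩ := Nat.mem_primesBelow.1 (hP hp)
  rcases hp.dvd_mul.1 hdvd with hd | hd
  · have := (Nat.prime_dvd_prime_iff_eq hp hn).1 hd
    lia
  · have := (Nat.prime_dvd_prime_iff_eq hp hnh).1 hd
    lia

lemma exp_neg_add_exp_sub_le {ℓ S : ℝ} (hℓ : 0 ≤ ℓ)
    (hS : S ∈ Icc (3 / 2 * ℓ) (3 / 2 * ℓ + 1)) :
    exp (-S) + exp (exp 1 * S - 2 * ↑(⌈3 * ℓ⌉₊ + 2)) ≤ 2 * exp (-(3 / 2 * ℓ)) := by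
  have hS0 : 0 ≤ S := by linarith [hS.1]
  have hmul : exp 1 * S ≤ 2.72 * (3 / 2 * ℓ + 1) := by
    gcongr
    exacts [by linarith [exp_one_lt_d9], hS.2]
  have hceil := Nat.le_ceil (3 * ℓ)
  rw [two_mul (exp _)]
  push_cast
  gcongr
  exacts [hS.1, by linarith]

lemma eventually_card_prime_pair_le {h : ℕ} (hh : h ≠ 0) :
    ∀ᶠ N : ℕ in atTop, (#{n ∈ Finset.range N | n.Prime ∧ (n + h).Prime} : ℝ) ≤
      2 * (N * log N ^ (-(3 / 2) : ℝ)) + 4 * √N := by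
  have hlogN : Tendsto (fun N : ℕ => log N) atTop atTop :=
    tendsto_log_atTop.comp tendsto_natCast_atTop_atTop
  filter_upwards [hlogN.eventually (eventually_exists_sieving_primes hh),
    hlogN.eventually eventually_two_mul_exp_rpow_pow_le, hlogN.eventually_ge_atTop 1,
    eventually_ge_atTop 1] with N ⟨P, hPsub, hPh, hsum⟩ hlevel hL hN
  set L := log N
  set M := ⌊exp (L ^ (9 / 10 : ℝ))⌋₊
  set k := ⌈3 * log L⌉₊ + 2
  set Y := 2 * exp (L ^ (9 / 10 : ℝ))
  have hMY : 2 * (M : ℝ) ≤ Y := mul_le_mul_of_nonneg_left (Nat.floor_le (exp_pos _).le) two_pos.le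
  have hY : 1 ≤ Y := by linarith [one_le_exp (show 0 ≤ L ^ (9 / 10 : ℝ) by positivity)]
  have hcardP : (#P : ℝ) ≤ M := by
    exact_mod_cast (Finset.card_le_card (hPsub.trans (Finset.filter_subset _ _))).trans_eq
      (Finset.card_range M)
  have hsieve := card_range_filter_forall_not_dvd_mul_add_le
    (fun p hp => Nat.prime_of_mem_primesBelow (hPsub hp)) hPh hY
    (by linarith : 2 * (#P : ℝ) ≤ Y) N k
  have hsqrt : Y ^ (2 * k) ≤ √N := by
    rwa [exp_half, exp_log (mod_cast hN)] at hlevel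
  have hMsqrt : (M : ℝ) ≤ √N := by
    linarith [le_self_pow₀ hY (by lia : 2 * k ≠ 0), (M.cast_nonneg : (0 : ℝ) ≤ M)]
  calc (#{n ∈ Finset.range N | n.Prime ∧ (n + h).Prime} : ℝ)
      ≤ #{n ∈ Finset.range N | ∀ p ∈ P, ¬p ∣ n * (n + h)} + M := by
        exact_mod_cast card_range_filter_prime_pair_le hPsub h N
    _ ≤ N * (2 * exp (-(3 / 2 * log L))) + 3 * √N + √N := by
        refine add_le_add (hsieve.trans ?_) hMsqrt
        gcongr
        · exact exp_neg_add_exp_sub_le (log_nonneg hL) hsum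
        · linarith [exp_one_lt_d9]
    _ = N * (2 * L ^ (-(3 / 2) : ℝ)) + 3 * √N + √N := by
        rw [rpow_def_of_pos (by linarith), mul_neg, mul_comm (log L)]
    _ = _ := by ring

end PrimePairs

/-! ### Pairs of prime powers with a fixed difference -/

section PrimePowerPairs

lemma isLittleO_sqrt_div_log : Real.sqrt =o[atTop] fun x => x / log x := by
  have hlog : log =o[atTop] Real.sqrt := by
    rw [funext sqrt_eq_rpow]
    exact isLittleO_log_rpow_atTop one_half_pos
  refine (((isBigO_refl Real.sqrt atTop).mul_isLittleO hlog).mul_isBigO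
    (isBigO_refl (fun x => (log x)⁻¹) atTop)).congr' ?_ ?_
  · filter_upwards [eventually_gt_atTop 1] with x hx
    exact mul_inv_cancel_right₀ (log_pos hx).ne' _
  · filter_upwards [eventually_ge_atTop 0] with x hx
    rw [mul_self_sqrt hx, div_eq_mul_inv]

lemma isLittleO_mul_log_rpow_div_log {s : ℝ} (hs : s < -1) :
    (fun x => x * log x ^ s) =o[atTop] fun x => x / log x := by
  have hrpow : (fun x : ℝ => x ^ s) =o[atTop] fun x => x⁻¹ := by
    refine isLittleO_of_tendsto' ?_
      ((tendsto_rpow_neg_atTop (by linarith : 0 < -(s + 1))).congr' ?_)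
    · filter_upwards [eventually_ne_atTop 0] with x hx h0
      exact absurd h0 (inv_ne_zero hx)
    · filter_upwards [eventually_ne_atTop 0] with x hx
      rw [neg_neg, rpow_add_one hx, div_inv_eq_mul]
  simp_rw [div_eq_mul_inv]
  exact (isBigO_refl _ _).mul_isLittleO (hrpow.comp_tendsto tendsto_log_atTop)

lemma isLittleO_card_prime_pair {h : ℕ} (hh : h ≠ 0) :
    (fun N : ℕ => (#{n ∈ Finset.range N | n.Prime ∧ (n + h).Prime} : ℝ)) =o[atTop]
      fun N : ℕ => N / log N := by
  have hbound : (fun N : ℕ => 2 * (N * log N ^ (-(3 / 2) : ℝ)) + 4 * √N) =o[atTop]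
      fun N : ℕ => N / log N :=
    (((isLittleO_mul_log_rpow_div_log (by norm_num)).const_mul_left 2).add
      (isLittleO_sqrt_div_log.const_mul_left 4)).comp_tendsto tendsto_natCast_atTop_atTop
  refine (IsBigO.of_bound' ?_).trans_isLittleO hbound
  filter_upwards [eventually_card_prime_pair_le hh] with N hN
  rw [norm_natCast]
  exact hN.trans (le_norm_self _)

lemma exists_card_primePow_not_prime_le :
    ∃ C : ℝ, ∀ N : ℕ, (#{n ∈ Finset.range N | IsPrimePow n ∧ ¬n.Prime} : ℝ) ≤ C * √N := by
  obtain ⟨C, hC⟩ := Chebyshev.psi_sub_theta_le_mul_sqrt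
  refine ⟨C / log 2, fun N => ?_⟩
  have hlog2 : 0 < log 2 := log_pos one_lt_two
  rw [div_mul_eq_mul_div, le_div_iff₀ hlog2]
  calc (#{n ∈ Finset.range N | IsPrimePow n ∧ ¬n.Prime} : ℝ) * log 2
      ≤ ∑ n ∈ Finset.range N with IsPrimePow n ∧ ¬n.Prime, Λ n := by
        rw [← nsmul_eq_mul]
        refine Finset.card_nsmul_le_sum _ _ _ fun n hn => ?_
        have hn := (Finset.mem_filter.1 hn).2.1
        rw [ArithmeticFunction.vonMangoldt_apply, if_pos hn]
        exact log_le_log two_pos (mod_cast (Nat.minFac_prime hn.ne_one).two_le)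
    _ ≤ ∑ n ∈ Finset.Ioc 0 ⌊(N : ℝ)⌋₊ with ¬n.Prime, Λ n := by
        refine Finset.sum_le_sum_of_subset_of_nonneg (fun n hn => ?_)
          fun n _ _ => ArithmeticFunction.vonMangoldt_nonneg
        simp only [Nat.floor_natCast, Finset.mem_filter, Finset.mem_range, Finset.mem_Ioc] at hn ⊢
        exact ⟨⟨hn.2.1.pos, hn.1.le⟩, hn.2.2⟩
    _ ≤ C * √N := (Chebyshev.psi_sub_theta_eq_sum_not_prime N).symm.trans_le (hC N)

lemma isLittleO_card_primePow_not_prime (h : ℕ) :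
    (fun N : ℕ => (#{n ∈ Finset.range (N + h) | IsPrimePow n ∧ ¬n.Prime} : ℝ)) =o[atTop]
      fun N : ℕ => N / log N := by
  obtain ⟨C, hC⟩ := exists_card_primePow_not_prime_le
  have hbound : (fun N : ℕ => C * √2 * √N) =o[atTop] fun N : ℕ => N / log N :=
    (isLittleO_sqrt_div_log.const_mul_left (C * √2)).comp_tendsto tendsto_natCast_atTop_atTop
  have hC0 : 0 ≤ C := by
    have := hC 1
    rw [Nat.cast_one, sqrt_one, mul_one] at this
    exact (Nat.cast_nonneg _).trans this
  refine (IsBigO.of_bound' ?_).trans_isLittleO hbound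
  filter_upwards [eventually_ge_atTop h] with N hN
  rw [norm_natCast, mul_assoc, ← sqrt_mul zero_le_two]
  refine ((hC (N + h)).trans ?_).trans (le_norm_self _)
  gcongr
  push_cast
  linarith [(Nat.cast_le (α := ℝ)).2 hN]

lemma card_primePow_pair_le (h N : ℕ) :
    #{n ∈ Finset.range N | IsPrimePow n ∧ IsPrimePow (n + h)} ≤
      #{n ∈ Finset.range N | n.Prime ∧ (n + h).Prime} +
        2 * #{n ∈ Finset.range (N + h) | IsPrimePow n ∧ ¬n.Prime} := by
  have hsub : {n ∈ Finset.range N | IsPrimePow n ∧ IsPrimePow (n + h)} ⊆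
      {n ∈ Finset.range N | n.Prime ∧ (n + h).Prime} ∪
        ({n ∈ Finset.range (N + h) | IsPrimePow n ∧ ¬n.Prime} ∪
          {n ∈ Finset.range (N + h) | IsPrimePow n ∧ ¬n.Prime}.image (· - h)) := by
    intro n hn
    simp only [Finset.mem_filter, Finset.mem_union, Finset.mem_range, Finset.mem_image] at hn ⊢
    by_cases hprime : n.Prime
    · by_cases hprime' : (n + h).Prime
      · exact .inl ⟨hn.1, hprime, hprime'⟩
      · exact .inr (.inr ⟨n + h, ⟨by lia, hn.2.2, hprime'⟩, by lia⟩)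
    · exact .inr (.inl ⟨by lia, hn.2.1, hprime⟩)
  grw [hsub, Finset.card_union_le, Finset.card_union_le, Finset.card_image_le, two_mul]

theorem isLittleO_card_primePow_pair {h : ℕ} (hh : h ≠ 0) :
    (fun N : ℕ => (#{n ∈ Finset.range N | IsPrimePow n ∧ IsPrimePow (n + h)} : ℝ)) =o[atTop]
      fun N : ℕ => N / log N := by
  refine (IsBigO.of_bound' (.of_forall fun N => ?_)).trans_isLittleO
    ((isLittleO_card_prime_pair hh).add ((isLittleO_card_primePow_not_prime h).const_mul_left 2))
  rw [norm_natCast]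
  refine le_trans ?_ (le_norm_self _)
  exact_mod_cast card_primePow_pair_le h N

end PrimePowerPairs

/-! ### Autocorrelation along finite samples -/

section ShiftCount

variable {A : Type*} [AddCommGroup A] [DecidableEq A]

/-- The number of pairs of elements of `G` with difference `h`, i.e. the unnormalised weight at `h`
of the autocorrelation of `G`. The pair `(y + h, y)` is recorded by its second member. -/
def shiftCount (G : Finset A) (h : A) : ℕ := #{y ∈ G | y + h ∈ G}

lemma shiftCount_zero (G : Finset A) : shiftCount G 0 = #G := by
  rw [shiftCount, Finset.filter_true_of_mem fun y hy => by rwa [add_zero]]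

lemma shiftCount_neg (G : Finset A) (h : A) : shiftCount G (-h) = shiftCount G h :=
  Finset.card_bij' (fun y _ => y + -h) (fun y _ => y + h) (by simp +contextual)
    (by simp +contextual) (by simp) (by simp)

lemma card_filter_sub_eq (G : Finset A) (h : A) :
    #{p ∈ G ×ˢ G | p.1 - p.2 = h} = shiftCount G h := by
  refine Finset.card_bij' (fun p _ => p.2) (fun y _ => (y + h, y)) (fun p hp => ?_)
    (by simp +contextual) (fun p hp => ?_) (by simp) <;>
  obtain ⟨hmem, rfl⟩ := Finset.mem_filter.1 hp
  · rw [Finset.mem_filter, add_sub_cancel]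
    exact (Finset.mem_product.1 hmem).symm
  · rw [add_sub_cancel]

lemma sum_sum_sub_eq_sum_shiftCount {M : Type*} [AddCommMonoid M] (G : Finset A) {F : A → M}
    {S : Finset A} (hS : ∀ h ∉ S, F h = 0) :
    ∑ x ∈ G, ∑ y ∈ G, F (x - y) = ∑ h ∈ S, shiftCount G h • F h := by
  calc ∑ x ∈ G, ∑ y ∈ G, F (x - y)
      = ∑ p ∈ G ×ˢ G with p.1 - p.2 ∈ S, F (p.1 - p.2) := by
        rw [← Finset.sum_product', Finset.sum_filter_of_ne]
        exact fun p _ => not_imp_comm.1 (hS _)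
    _ = ∑ h ∈ S, ∑ p ∈ G ×ˢ G with p.1 - p.2 = h, F (p.1 - p.2) :=
        (Finset.sum_fiberwise_eq_sum_filter _ _ _ _).symm
    _ = ∑ h ∈ S, shiftCount G h • F h := Finset.sum_congr rfl fun h _ => by
        rw [Finset.sum_congr rfl fun p hp => by rw [(Finset.mem_filter.1 hp).2],
          Finset.sum_const, card_filter_sub_eq]

lemma tendsto_inv_card_mul_sum_sum_sub {ι : Type*} {l : Filter ι} {G : ι → Finset A}
    (hG : ∀ᶠ i in l, (G i).Nonempty)
    (hshift : ∀ h ≠ 0, (fun i => (shiftCount (G i) h : ℝ)) =o[l] fun i => (#(G i) : ℝ))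
    {F : A → ℂ} (hF : F.support.Finite) :
    Tendsto (fun i => (#(G i) : ℂ)⁻¹ * ∑ x ∈ G i, ∑ y ∈ G i, F (x - y)) l (𝓝 (F 0)) := by
  have hfreq (h : A) :
      Tendsto (fun i => (shiftCount (G i) h / #(G i) : ℝ)) l (𝓝 (if h = 0 then 1 else 0)) := by
    split_ifs with h0
    · refine tendsto_const_nhds.congr' ?_
      filter_upwards [hG] with i hi
      rw [h0, shiftCount_zero, div_self (by exact_mod_cast hi.card_ne_zero)]
    · exact (hshift h h0).tendsto_div_nhds_zero
  have hlim := tendsto_finsetSum (insert 0 hF.toFinset) fun h _ =>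
    ((Complex.continuous_ofReal.tendsto _).comp (hfreq h)).mul_const (F h)
  convert hlim using 1
  · funext i
    rw [sum_sum_sub_eq_sum_shiftCount (S := insert 0 hF.toFinset) _ (by simp +contextual),
      Finset.mul_sum]
    refine Finset.sum_congr rfl fun h _ => ?_
    simp only [Function.comp_apply, nsmul_eq_mul, Complex.ofReal_div, Complex.ofReal_natCast]
    ring
  · rw [Finset.sum_eq_single_of_mem 0 (Finset.mem_insert_self _ _) fun h _ hh => by simp [hh]]
    simp

end ShiftCount

/-! ### Prime powers in intervals -/

section PrimePowersIn

/-- The integers `m` with `|m|` a prime power lying in the real interval `[a, b]`, i.e. the sample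
`ℙ_pow ∩ [a, b]` with its elements regarded as integers. -/
noncomputable def primePowersIn (a b : ℝ) : Finset ℤ :=
  {m ∈ Finset.Icc ⌈a⌉ ⌊b⌋ | IsPrimePow m.natAbs}

lemma mem_primePowersIn {a b : ℝ} {m : ℤ} :
    m ∈ primePowersIn a b ↔ (m : ℝ) ∈ Icc a b ∧ IsPrimePow m.natAbs := by
  rw [primePowersIn, Finset.mem_filter, Finset.mem_Icc, Int.ceil_le, Int.le_floor, Set.mem_Icc]

lemma mem_PrimePowR_iff {x : ℝ} : x ∈ PrimePowR ↔ ∃ m : ℤ, (m : ℝ) = x ∧ IsPrimePow m.natAbs := by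
  constructor
  · rintro ⟨p, k, hp, hk, rfl | rfl⟩
    · exact ⟨(p ^ k : ℕ), by simp, by simpa using hp.isPrimePow.pow (by lia)⟩
    · exact ⟨-(p ^ k : ℕ), by simp, by simpa using hp.isPrimePow.pow (by lia)⟩
  · rintro ⟨m, rfl, hm⟩
    obtain ⟨p, k, hp, hk, hpk⟩ := (isPrimePow_nat_iff _).1 hm
    refine ⟨p, k, hp, hk, ?_⟩
    rw [hpk, ← Int.cast_natCast (R := ℝ), ← Int.cast_neg]
    exact_mod_cast m.natAbs_eq

lemma PrimePowR_inter_Icc (a b : ℝ) :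
    PrimePowR ∩ Icc a b = (fun m : ℤ => (m : ℝ)) '' primePowersIn a b := by
  ext x
  simp only [Set.mem_inter_iff, mem_PrimePowR_iff, Set.mem_image, Finset.mem_coe,
    mem_primePowersIn]
  constructor
  · rintro ⟨⟨m, rfl, hm⟩, hx⟩
    exact ⟨m, ⟨hx, hm⟩, rfl⟩
  · rintro ⟨m, ⟨hx, hm⟩, rfl⟩
    exact ⟨⟨m, rfl, hm⟩, hx⟩

lemma autoCorr_PrimePowR_inter_Icc (a b : ℝ) (f : ℝ → ℂ) :
    autoCorr (PrimePowR ∩ Icc a b) f =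
      (#(primePowersIn a b) : ℂ)⁻¹ *
        ∑ x ∈ primePowersIn a b, ∑ y ∈ primePowersIn a b, f ((x - y : ℤ) : ℝ) := by
  have hinj : Set.InjOn (fun m : ℤ => (m : ℝ)) (primePowersIn a b) := Int.cast_injective.injOn
  simp only [autoCorr, PrimePowR_inter_Icc, hinj.ncard_image, Set.ncard_coe_finset,
    finsum_mem_image hinj, finsum_mem_coe_finset, Int.cast_sub]

lemma card_primePowersIn_neg (a b : ℝ) : #(primePowersIn (-b) (-a)) = #(primePowersIn a b) := by
  refine Finset.card_bij' (fun m _ => -m) (fun m _ => -m) ?_ ?_ (by simp) (by simp) <;>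
  · simp only [mem_primePowersIn, Set.mem_Icc, Int.cast_neg, Int.natAbs_neg]
    exact fun m hm => ⟨⟨by linarith [hm.1.2], by linarith [hm.1.1]⟩, hm.2⟩

lemma natAbs_le_floor_of_mem_primePowersIn {a b : ℝ} {m : ℤ} (hm : m ∈ primePowersIn a b) :
    m.natAbs ≤ ⌊max |a| |b|⌋₊ := by
  obtain ⟨⟨ha, hb⟩, -⟩ := mem_primePowersIn.1 hm
  refine Nat.le_floor ?_
  rw [Nat.cast_natAbs, Int.cast_abs]
  exact abs_le_max_abs_abs ha hb

lemma shiftCount_primePowersIn_le {a b : ℝ} {N : ℕ} (hN : ∀ m ∈ primePowersIn a b, m.natAbs < N)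
    (h : ℕ) : shiftCount (primePowersIn a b) h ≤
      2 * #{n ∈ Finset.range N | IsPrimePow n ∧ IsPrimePow (n + h)} + (h + 1) := by
  set Q := {n ∈ Finset.range N | IsPrimePow n ∧ IsPrimePow (n + h)} with hQ
  have hsub : {y ∈ primePowersIn a b | y + (h : ℤ) ∈ primePowersIn a b} ⊆
      Q.image (fun n : ℕ => (n : ℤ)) ∪ Q.image (fun n : ℕ => -(n : ℤ) - h) ∪
        Finset.Icc (-h : ℤ) 0 := by
    intro y hy
    obtain ⟨hy, hyh⟩ := Finset.mem_filter.1 hy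
    have hyN := hN y hy
    have hyhN := hN _ hyh
    replace hy := (mem_primePowersIn.1 hy).2
    replace hyh := (mem_primePowersIn.1 hyh).2
    simp only [hQ, Finset.mem_union, Finset.mem_image, Finset.mem_filter, Finset.mem_range,
      Finset.mem_Icc]
    rcases lt_or_ge 0 y with hpos | hnonpos
    · refine .inl (.inl ⟨y.natAbs, ⟨hyN, hy, ?_⟩, by lia⟩)
      rwa [show y.natAbs + h = (y + h).natAbs by lia]
    · rcases lt_or_ge (y + h) 0 with hneg | hnonneg
      · refine .inl (.inr ⟨(y + h).natAbs, ⟨hyhN, hyh, ?_⟩, by lia⟩)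
        rwa [show (y + h).natAbs + h = y.natAbs by lia]
      · exact .inr ⟨by lia, hnonpos⟩
  have hIcc : #(Finset.Icc (-h : ℤ) 0) = h + 1 := by rw [Int.card_Icc]; lia
  rw [shiftCount]
  grw [hsub, Finset.card_union_le, Finset.card_union_le, Finset.card_image_le,
    Finset.card_image_le, hIcc, two_mul]

lemma card_primePow_Ioc_le_card_primePowersIn {a b s t : ℝ} (has : a ≤ s) (htb : t ≤ b)
    (ht : 0 ≤ t) :
    #{n ∈ Finset.Ioc ⌊s⌋₊ ⌊t⌋₊ | IsPrimePow n} ≤ #(primePowersIn a b) := by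
  refine Finset.card_le_card_of_injOn (fun n : ℕ => (n : ℤ)) (fun n hn => ?_)
    Nat.cast_injective.injOn
  obtain ⟨hn, hpow⟩ := Finset.mem_filter.1 hn
  rw [Finset.mem_Ioc] at hn
  refine mem_primePowersIn.2 ⟨⟨?_, ?_⟩, by simpa using hpow⟩ <;> rw [Int.cast_natCast]
  · exact has.trans (Nat.lt_of_floor_lt hn.1).le
  · exact ((Nat.le_floor_iff ht).1 hn.2).trans htb

/-- The end point of `[a, b]` of larger modulus `T` is `b = T` or `a = -T`, so that `[a, b]`
contains a fixed proportion of `(0, T]` or of `[-T, 0)`. -/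
lemma card_primePow_Ioc_max_le_card_primePowersIn {a b C : ℝ} (hC : 0 < C)
    (hab : a < b) (ha : |a| ≤ C * (b - a)) :
    #{n ∈ Finset.Ioc ⌊C / (C + 1) * max |a| |b|⌋₊ ⌊max |a| |b|⌋₊ | IsPrimePow n} ≤
      #(primePowersIn a b) := by
  set T := max |a| |b| with hT
  have hT0 : 0 ≤ T := (abs_nonneg a).trans (le_max_left _ _)
  have hb : |b| ≤ (C + 1) * (b - a) := by
    have := abs_add_le a (b - a)
    rw [add_sub_cancel, abs_of_pos (sub_pos.2 hab)] at this
    linarith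
  have hTle : T - (b - a) ≤ C / (C + 1) * T := by
    have hTb : T ≤ (C + 1) * (b - a) := max_le (by linarith) hb
    have : T / (C + 1) ≤ b - a := by rwa [div_le_iff₀' (by linarith)]
    have : C / (C + 1) * T = T - T / (C + 1) := by field_simp; ring
    linarith
  rcases le_total |a| |b| with h | h
  · have hbT : T = b := by
      rw [hT, max_eq_right h, abs_of_nonneg]
      by_contra hneg
      rw [abs_of_neg (by linarith), abs_of_neg (by linarith)] at h
      linarith
    exact card_primePow_Ioc_le_card_primePowersIn (by linarith) hbT.le hT0
  · have haT : T = -a := by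
      rw [hT, max_eq_left h, abs_of_nonpos]
      by_contra hpos
      rw [abs_of_pos (by linarith), abs_of_pos (by linarith)] at h
      linarith
    rw [← card_primePowersIn_neg]
    exact card_primePow_Ioc_le_card_primePowersIn (by linarith) haT.le hT0

end PrimePowersIn


/-! ### Intervals whose left end point is controlled by their length -/

section Intervals

variable {ι : Type*} {l : Filter ι} {a b : ι → ℝ}

lemma isBigO_floor_add_one_div_log :
    (fun T : ℝ => ((⌊T⌋₊ + 1 : ℕ) : ℝ) / log (⌊T⌋₊ + 1 : ℕ)) =O[atTop] fun T => T / log T := by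
  refine .of_bound 2 ?_
  filter_upwards [eventually_gt_atTop 1] with T hT
  have hlog : 0 < log T := log_pos hT
  have hle : ((⌊T⌋₊ + 1 : ℕ) : ℝ) ≤ 2 * T := by
    push_cast
    linarith [Nat.floor_le (zero_le_one.trans hT.le)]
  have hge : T ≤ (⌊T⌋₊ + 1 : ℕ) := by exact_mod_cast (Nat.lt_floor_add_one T).le
  have hlog_le : log T ≤ log (⌊T⌋₊ + 1 : ℕ) := log_le_log (by linarith) hge
  rw [norm_of_nonneg (div_nonneg (by positivity) (hlog.le.trans hlog_le)),
    norm_of_nonneg (div_nonneg (by linarith) hlog.le), ← mul_div_assoc]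
  exact div_le_div₀ (by linarith) hle hlog hlog_le

lemma tendsto_max_abs_atTop (hw : Tendsto (fun i => b i - a i) l atTop) :
    Tendsto (fun i => max |a i| |b i|) l atTop := by
  refine tendsto_atTop_mono (fun i => ?_) (hw.atTop_div_const two_pos)
  linarith [neg_abs_le (a i), le_abs_self (b i), le_max_left |a i| |b i|, le_max_right |a i| |b i|]

lemma isBigO_card_primePowersIn (hw : Tendsto (fun i => b i - a i) l atTop)
    (hd : a =O[l] fun i => b i - a i) :
    (fun i => max |a i| |b i| / log (max |a i| |b i|)) =O[l]
      fun i => (#(primePowersIn (a i) (b i)) : ℝ) := by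
  obtain ⟨C, hC, hbound⟩ := hd.exists_pos
  have hθ : C / (C + 1) < 1 := (div_lt_one (by linarith)).2 (lt_add_one C)
  refine ((isBigO_card_primePow_Ioc (by positivity) hθ).comp_tendsto
    (tendsto_max_abs_atTop hw)).trans (.of_bound' ?_)
  filter_upwards [hbound.bound, hw.eventually_gt_atTop 0] with i hi hpos
  rw [norm_eq_abs, norm_of_nonneg hpos.le] at hi
  simpa using card_primePow_Ioc_max_le_card_primePowersIn hC (sub_pos.1 hpos) hi

lemma eventually_primePowersIn_nonempty (hw : Tendsto (fun i => b i - a i) l atTop)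
    (hd : a =O[l] fun i => b i - a i) : ∀ᶠ i in l, (primePowersIn (a i) (b i)).Nonempty := by
  filter_upwards [(isBigO_card_primePowersIn hw hd).eq_zero_imp,
    (tendsto_max_abs_atTop hw).eventually_gt_atTop 1] with i hzero hT
  by_contra hempty
  rw [Finset.not_nonempty_iff_eq_empty] at hempty
  exact (div_pos (zero_lt_one.trans hT) (log_pos hT)).ne' (hzero (by simp [hempty]))

lemma isLittleO_shiftCount_primePowersIn_natCast (hw : Tendsto (fun i => b i - a i) l atTop)
    {h : ℕ} (hh : h ≠ 0) :
    (fun i => (shiftCount (primePowersIn (a i) (b i)) h : ℝ)) =o[l]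
      fun i => max |a i| |b i| / log (max |a i| |b i|) := by
  have hpairs : (fun T : ℝ => (#{n ∈ Finset.range (⌊T⌋₊ + 1) |
      IsPrimePow n ∧ IsPrimePow (n + h)} : ℝ)) =o[atTop] fun T => T / log T :=
    ((isLittleO_card_primePow_pair hh).comp_tendsto
      ((tendsto_add_atTop_nat 1).comp tendsto_nat_floor_atTop)).trans_isBigO
      isBigO_floor_add_one_div_log
  have hconst : (fun _ : ℝ => (h + 1 : ℝ)) =o[atTop] fun T => T / log T :=
    (isLittleO_const_left.2 (.inr (tendsto_norm_atTop_atTop.comp tendsto_sqrt_atTop))).trans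
      isLittleO_sqrt_div_log
  refine (IsBigO.of_bound' (.of_forall fun i => ?_)).trans_isLittleO
    (((hpairs.const_mul_left 2).add hconst).comp_tendsto (tendsto_max_abs_atTop hw))
  have hcount := shiftCount_primePowersIn_le (a := a i) (b := b i)
    (fun m hm => Nat.lt_succ_of_le (natAbs_le_floor_of_mem_primePowersIn hm)) h
  rw [Function.comp_apply, norm_of_nonneg (by positivity), norm_of_nonneg (by positivity)]
  exact_mod_cast hcount

lemma isLittleO_shiftCount_primePowersIn (hw : Tendsto (fun i => b i - a i) l atTop)
    (hd : a =O[l] fun i => b i - a i) {h : ℤ} (hh : h ≠ 0) :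
    (fun i => (shiftCount (primePowersIn (a i) (b i)) h : ℝ)) =o[l]
      fun i => (#(primePowersIn (a i) (b i)) : ℝ) := by
  have hnat := (isLittleO_shiftCount_primePowersIn_natCast hw
    (Int.natAbs_ne_zero.2 hh)).trans_isBigO (isBigO_card_primePowersIn hw hd)
  rcases h.natAbs_eq with heq | heq <;> rw [heq]
  · exact hnat
  · simpa only [shiftCount_neg] using hnat

end Intervals

lemma finite_support_comp_intCast {M : Type*} [Zero M] {f : ℝ → M} (hf : HasCompactSupport f) :
    (fun m : ℤ => f m).support.Finite :=
  (isCompact_iff_finite.1 (Int.isClosedEmbedding_coe_real.isCompact_preimage hf)).subset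
    fun _ hm => subset_tsupport f hm

theorem prime_powers_counting_autocorrelation_general {ι : Type*} {l : Filter ι} {a b : ι → ℝ}
    (hw : Tendsto (fun i => b i - a i) l atTop) (hd : a =O[l] fun i => b i - a i)
    {f : ℝ → ℂ} (hf : HasCompactSupport f) :
    Tendsto (fun i => autoCorr (PrimePowR ∩ Icc (a i) (b i)) f) l (𝓝 (f 0)) := by
  simp only [autoCorr_PrimePowR_inter_Icc]
  simpa only [Int.cast_zero] using
    tendsto_inv_card_mul_sum_sum_sub (eventually_primePowersIn_nonempty hw hd)
      (fun h hh => isLittleO_shiftCount_primePowersIn hw hd hh) (finite_support_comp_intCast hf)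

theorem prime_powers_counting_autocorrelation
    (a b : ℕ → ℝ)
    (hw : Tendsto (fun n => b n - a n) atTop atTop)
    (hd : ∃ d : ℝ, 0 < d ∧ ∀ n, |a n| < d * (b n - a n)) :
    ∀ f : ℝ → ℂ, Continuous f → HasCompactSupport f →
      Tendsto (fun n => autoCorr (PrimePowR ∩ Set.Icc (a n) (b n)) f) atTop (nhds (f 0)) := by
  obtain ⟨d, hd, hbound⟩ := hd
  refine fun f _ hf => prime_powers_counting_autocorrelation_general hw (.of_bound d ?_) hf
  exact .of_forall fun n => (hbound n).le.trans (by gcongr; exact le_abs_self _)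
end

section
/- Let d ≥ 1 be an integer not divisible by 3, and assume ℙ_d is infinite. Let (n_k) be a strictly increasing sequence of natural numbers and γ a Radon measure on ℝ such that, writing F_m = ℙ_d ∩ [−m, m], for every continuous compactly supported f : ℝ → ℂ one has (1/card F_{n_k})·Σ_{x,y∈F_{n_k}} f(x−y) → ∫ f dγ as k → ∞. Then γ({d}) = 1/2; in particular γ ≠ δ_0. -/
open Filter Topology Set MeasureTheory

/-- The set of prime numbers together with their negatives, as a subset of `ℝ`. -/
def PrimesR : Set ℝ := {x | ∃ p : ℕ, p.Prime ∧ (x = (p : ℝ) ∨ x = -(p : ℝ))}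

/-- `ℙ_d = {p : p ∈ ℙ, p + d ∈ ℙ} ∪ {p + d : p ∈ ℙ, p + d ∈ ℙ}`. -/
def Pd (d : ℕ) : Set ℝ :=
  {x | (x ∈ PrimesR ∧ x + d ∈ PrimesR) ∨ (x - d ∈ PrimesR ∧ x ∈ PrimesR)}

/-!
Fix the window `F = ℙ_d ∩ [-m, m]` and let `u` be the number of `x ∈ F` with `x - d ∈ F`. Every
point of `ℙ_d` has a neighbour in `ℙ_d` at distance `d`, so only the points of `F` within `d` of
`±m` can lose it. Conversely `x - d`, `x`, `x + d` are distinct modulo `3`, so if all three are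
primes up to sign, then one of them is `±3`, and at most six points of `F` have both neighbours.
Hence `2 * u = card F + O(1)`, that is, the frequency of the difference `d` tends to `1/2`. Since
the differences of `F` are integers, testing the autocorrelation on bump functions shrinking to `d`
identifies that frequency with `γ {d}`.
-/

section DifferenceCount

variable {G : Type*} [AddGroup G]

/-- The number of ordered pairs `(x, y)` of points of `F` with `x - y = t`, each pair being
recorded by its first entry. For an infinite set of such pairs this is `0`. -/
noncomputable def diffCount (F : Set G) (t : G) : ℕ := {x ∈ F | x - t ∈ F}.ncard

lemma ncard_add_mem_eq_diffCount (F : Set G) (t : G) :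
    {x ∈ F | x + t ∈ F}.ncard = diffCount F t := by
  have image_add : (· + t) '' {x ∈ F | x + t ∈ F} = {x ∈ F | x - t ∈ F} := by
    ext x
    simp [and_comm, sub_eq_add_neg]
  rw [diffCount, ← image_add, ncard_image_of_injective _ (add_left_injective t)]

lemma two_mul_diffCount_add_ncard_isolated {F : Set G} (hF : F.Finite) (t : G) :
    2 * diffCount F t + {x ∈ F | x - t ∉ F ∧ x + t ∉ F}.ncard =
      F.ncard + {x ∈ F | x - t ∈ F ∧ x + t ∈ F}.ncard := by
  set U := {x ∈ F | x - t ∈ F} with hU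
  set L := {x ∈ F | x + t ∈ F} with hL
  have union_subset : U ∪ L ⊆ F := union_subset (sep_subset _ _) (sep_subset _ _)
  have inter_eq : {x ∈ F | x - t ∈ F ∧ x + t ∈ F} = U ∩ L := sep_and
  have diff_eq : {x ∈ F | x - t ∉ F ∧ x + t ∉ F} = F \ (U ∪ L) := by
    ext x
    simp only [hU, hL, Set.mem_sdiff, mem_union, mem_ofPred_eq]
    tauto
  have card_U : U.ncard = diffCount F t := rfl
  have card_L : L.ncard = diffCount F t := ncard_add_mem_eq_diffCount F t
  have card_union := ncard_union_add_ncard_inter U L (hF.sep _) (hF.sep _)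
  have card_diff := ncard_sdiff_add_ncard_of_subset union_subset hF
  rw [inter_eq, diff_eq]
  omega

end DifferenceCount

lemma autoCorr_eq_diffCount_div_ncard_mul {F : Set ℝ} (hF : F.Finite) {f : ℝ → ℂ} {t : ℝ}
    (hf : ∀ x ∈ F, ∀ y ∈ F, x - y ≠ t → f (x - y) = 0) :
    autoCorr F f = (diffCount F t : ℂ) / F.ncard * f t := by
  classical
  have inner_sum : ∀ x ∈ F, ∑ᶠ y ∈ F, f (x - y) = if x - t ∈ F then f t else 0 := by
    intro x hx
    have term_eq : ∀ y ∈ hF.toFinset, f (x - y) = if y = x - t then f t else 0 := by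
      intro y hy
      split_ifs with hyx
      · rw [hyx, sub_sub_cancel]
      · exact hf x hx y (hF.mem_toFinset.1 hy) fun h => hyx (by rw [← h, sub_sub_cancel])
    rw [finsum_mem_eq_finite_toFinset_sum _ hF, Finset.sum_congr rfl term_eq,
      Finset.sum_ite_eq']
    simp only [hF.mem_toFinset]
  have outer_sum : ∑ᶠ x ∈ F, ∑ᶠ y ∈ F, f (x - y) = diffCount F t * f t := by
    rw [finsum_mem_congr rfl inner_sum, finsum_mem_eq_finite_toFinset_sum _ hF,
      ← Finset.sum_filter, Finset.sum_const, nsmul_eq_mul, diffCount,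
      ncard_eq_toFinset_card _ (hF.sep _)]
    congr 3
    ext
    simp
  rw [autoCorr, outer_sum]
  ring

lemma tendsto_autoCorr_of_tendsto_diffCount {ι : Type*} {l : Filter ι} {F : ι → Set ℝ}
    (hF : ∀ i, (F i).Finite) {f : ℝ → ℂ} {t c : ℝ}
    (hf : ∀ i, ∀ x ∈ F i, ∀ y ∈ F i, x - y ≠ t → f (x - y) = 0)
    (hfreq : Tendsto (fun i => (diffCount (F i) t : ℝ) / (F i).ncard) l (𝓝 c)) :
    Tendsto (fun i => autoCorr (F i) f) l (𝓝 (c * f t)) := by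
  refine (((Complex.continuous_ofReal.tendsto c).comp hfreq).mul_const (f t)).congr fun i => ?_
  simp [autoCorr_eq_diffCount_div_ncard_mul (hF i) (hf i)]

lemma tendsto_integral_thickenedIndicator_of_isCompact {X : Type*} [MetricSpace X]
    [ProperSpace X] [MeasurableSpace X] [OpensMeasurableSpace X] (μ : Measure X)
    [IsFiniteMeasureOnCompacts μ] {K : Set X} (hK : IsCompact K) {δ : ℕ → ℝ}
    (δ_pos : ∀ n, 0 < δ n) (δ_lim : Tendsto δ atTop (𝓝 0)) :
    Tendsto (fun n => ∫ x, (thickenedIndicator (δ_pos n) K x : ℝ) ∂μ) atTop (𝓝 (μ.real K)) := by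
  set C := Metric.cthickening 1 K
  have K_subset : K ⊆ C := Metric.self_subset_cthickening K
  have : IsFiniteMeasure (μ.restrict C) :=
    isFiniteMeasure_restrict.2 hK.cthickening.measure_lt_top.ne
  have lim_restrict :=
    tendsto_integral_thickenedIndicator_of_isClosed (μ.restrict C) hK.isClosed δ_pos δ_lim
  rw [measureReal_restrict_apply hK.measurableSet, inter_eq_left.2 K_subset] at lim_restrict
  refine lim_restrict.congr' ?_
  filter_upwards [δ_lim.eventually_le_const zero_lt_one] with n hn
  refine setIntegral_eq_integral_of_forall_compl_eq_zero fun x hx => ?_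
  have x_out : x ∉ Metric.thickening (δ n) K := fun h =>
    hx (Metric.cthickening_mono hn K (Metric.thickening_subset_cthickening _ _ h))
  rw [thickenedIndicator_zero (δ_pos n) K x_out, NNReal.coe_zero]

lemma hasCompactSupport_thickenedIndicator {X : Type*} [PseudoMetricSpace X] [ProperSpace X]
    {K : Set X} (hK : IsCompact K) {δ : ℝ} (δ_pos : 0 < δ) :
    HasCompactSupport (thickenedIndicator δ_pos K) :=
  HasCompactSupport.intro hK.cthickening fun _ hx => thickenedIndicator_zero δ_pos K
    fun h => hx (Metric.thickening_subset_cthickening δ K h)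

theorem measureReal_singleton_eq_of_tendsto_autoCorr {ι : Type*} {l : Filter ι} [l.NeBot]
    {F : ι → Set ℝ} (hF : ∀ i, (F i).Finite) {γ : Measure ℝ} [IsFiniteMeasureOnCompacts γ]
    (hconv : ∀ f : ℝ → ℂ, Continuous f → HasCompactSupport f →
      Tendsto (fun i => autoCorr (F i) f) l (𝓝 (∫ x, f x ∂γ)))
    {t r c : ℝ} (hr : 0 < r)
    (hsep : ∀ i, ∀ x ∈ F i, ∀ y ∈ F i, x - y ≠ t → r ≤ dist (x - y) t)
    (hfreq : Tendsto (fun i => (diffCount (F i) t : ℝ) / (F i).ncard) l (𝓝 c)) :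
    γ.real {t} = c := by
  have δ_pos (n : ℕ) : 0 < r / (n + 1) := by positivity
  have δ_lim : Tendsto (fun n : ℕ => r / (n + 1)) atTop (𝓝 0) := by
    simpa [div_eq_mul_inv] using tendsto_one_div_add_atTop_nhds_zero_nat.const_mul r
  let bump (n : ℕ) (x : ℝ) : ℝ := thickenedIndicator (δ_pos n) {t} x
  have integral_bump (n : ℕ) : ∫ x, bump n x ∂γ = c := by
    have bump_self : bump n t = 1 :=
      congrArg NNReal.toReal (thickenedIndicator_one (δ_pos n) {t} (mem_singleton t))
    have bump_far (i) : ∀ x ∈ F i, ∀ y ∈ F i, x - y ≠ t → (bump n (x - y) : ℂ) = 0 := by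
      intro x hx y hy hxy
      have δ_le : r / (n + 1) ≤ dist (x - y) t :=
        (div_le_self hr.le (by simp)).trans (hsep i x hx y hy hxy)
      have bump_eq : bump n (x - y) = 0 := congrArg NNReal.toReal
        (thickenedIndicator_zero (δ_pos n) {t} (by simpa [Metric.thickening_singleton] using δ_le))
      rw [bump_eq, Complex.ofReal_zero]
    have lim_integral := hconv (fun x => (bump n x : ℂ)) (by fun_prop)
      ((hasCompactSupport_thickenedIndicator isCompact_singleton (δ_pos n)).comp_left
        (g := fun a : NNReal => ((a : ℝ) : ℂ)) (by simp))
    rw [integral_complex_ofReal] at lim_integral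
    have lim_freq := tendsto_autoCorr_of_tendsto_diffCount hF
      (f := fun x => (bump n x : ℂ)) bump_far hfreq
    simpa [bump_self] using tendsto_nhds_unique lim_integral lim_freq
  have lim_bump := tendsto_integral_thickenedIndicator_of_isCompact γ
    (isCompact_singleton (x := t)) δ_pos δ_lim
  exact tendsto_nhds_unique lim_bump (tendsto_const_nhds.congr fun n => (integral_bump n).symm)

lemma tendsto_div_of_abs_sub_mul_le {ι : Type*} {l : Filter ι} {u s : ι → ℝ} {c C : ℝ}
    (hs : Tendsto s l atTop) (hus : ∀ᶠ i in l, |u i - c * s i| ≤ C) :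
    Tendsto (fun i => u i / s i) l (𝓝 c) := by
  rw [tendsto_iff_norm_sub_tendsto_zero]
  refine squeeze_zero' (.of_forall fun _ => norm_nonneg _) ?_ (hs.const_div_atTop C)
  filter_upwards [hs.eventually_gt_atTop 0, hus] with i hi hui
  rw [div_sub' hi.ne', norm_div, Real.norm_eq_abs, Real.norm_of_nonneg hi.le, mul_comm (s i)]
  gcongr

lemma tendsto_ncard_inter_Icc_atTop {Λ : Set ℝ} (hΛ : Λ.Infinite)
    (hfin : ∀ m : ℕ, (Λ ∩ Icc (-(m : ℝ)) m).Finite) :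
    Tendsto (fun m : ℕ => (Λ ∩ Icc (-(m : ℝ)) m).ncard) atTop atTop := by
  refine tendsto_atTop.2 fun N => ?_
  obtain ⟨T, T_subset, T_finite, rfl⟩ := hΛ.exists_subset_ncard_eq N
  obtain ⟨R, hR⟩ := T_finite.isBounded.subset_closedBall 0
  filter_upwards [tendsto_natCast_atTop_atTop.eventually_ge_atTop R] with m hm
  refine ncard_le_ncard (fun x hx => ⟨T_subset hx, abs_le.1 ?_⟩) (hfin m)
  simpa using (mem_closedBall_zero_iff.1 (hR hx)).trans hm

lemma exists_prime_int_of_mem_PrimesR {x : ℝ} (hx : x ∈ PrimesR) : ∃ z : ℤ, Prime z ∧ z = x := by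
  obtain ⟨p, hp, rfl | rfl⟩ := hx
  · exact ⟨p, Nat.prime_iff_prime_int.1 hp, by simp⟩
  · exact ⟨-p, (Nat.prime_iff_prime_int.1 hp).neg, by simp⟩

lemma eq_three_or_eq_neg_three_of_prime {z : ℤ} (hz : Prime z) (h : 3 ∣ z) : z = 3 ∨ z = -3 := by
  have := Int.associated_iff_natAbs.1 ((Int.prime_three.dvd_prime_iff_associated hz).1 h)
  omega

lemma mem_of_prime_sub_of_prime_of_prime_add {a d : ℤ} (h3 : ¬ 3 ∣ d) (hsub : Prime (a - d))
    (ha : Prime a) (hadd : Prime (a + d)) :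
    a ∈ ({3, -3, 3 + d, -3 + d, 3 - d, -3 - d} : Finset ℤ) := by
  have three_dvd : 3 ∣ a - d ∨ 3 ∣ a ∨ 3 ∣ a + d := by
    have : a % 3 = 0 ∨ a % 3 = d % 3 ∨ a % 3 + d % 3 = 3 := by omega
    omega
  simp only [Finset.mem_insert, Finset.mem_singleton]
  rcases three_dvd with h | h | h
  · have := eq_three_or_eq_neg_three_of_prime hsub h
    omega
  · have := eq_three_or_eq_neg_three_of_prime ha h
    omega
  · have := eq_three_or_eq_neg_three_of_prime hadd h
    omega

lemma ncard_le_card_of_subset_image {α β : Type*} {A : Set β} {f : α → β} {S : Finset α}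
    (h : A ⊆ f '' S) : A.ncard ≤ S.card :=
  calc A.ncard ≤ (f '' S).ncard := ncard_le_ncard h (S.finite_toSet.image f)
    _ ≤ (S : Set α).ncard := ncard_image_le S.finite_toSet
    _ = S.card := ncard_coe_finset S

/-- The window `ℙ_d ∩ [-m, m]`, written `F_m` in the statement of the theorem. -/
abbrev PdWindow (d m : ℕ) : Set ℝ := Pd d ∩ Icc (-(m : ℝ)) m

section Window

variable {d m : ℕ} {x y : ℝ}

lemma Pd_subset_PrimesR : Pd d ⊆ PrimesR := by
  rintro x (hx | hx)
  exacts [hx.1, hx.2]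

lemma sub_mem_Pd_or_add_mem_Pd (hx : x ∈ Pd d) : x - d ∈ Pd d ∨ x + d ∈ Pd d := by
  rcases hx with ⟨hx, hxd⟩ | ⟨hxd, hx⟩
  · exact .inr (.inr ⟨by simpa using hx, hxd⟩)
  · exact .inl (.inl ⟨hxd, by simpa using hx⟩)

lemma exists_prime_int_of_mem_PdWindow (hx : x ∈ PdWindow d m) :
    ∃ z : ℤ, Prime z ∧ z = x ∧ -(m : ℤ) ≤ z ∧ z ≤ m := by
  obtain ⟨z, hz, rfl⟩ := exists_prime_int_of_mem_PrimesR (Pd_subset_PrimesR hx.1)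
  exact ⟨z, hz, rfl, mod_cast hx.2.1, mod_cast hx.2.2⟩

lemma PdWindow_finite (d m : ℕ) : (PdWindow d m).Finite := by
  refine ((finite_Icc (-(m : ℤ)) m).image ((↑) : ℤ → ℝ)).subset fun x hx => ?_
  obtain ⟨z, -, rfl, hz⟩ := exists_prime_int_of_mem_PdWindow hx
  exact ⟨z, hz, rfl⟩

lemma one_le_dist_sub_of_mem_PdWindow (hx : x ∈ PdWindow d m) (hy : y ∈ PdWindow d m)
    (hxy : x - y ≠ d) : 1 ≤ dist (x - y) d := by
  obtain ⟨a, -, rfl, -⟩ := exists_prime_int_of_mem_PdWindow hx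
  obtain ⟨b, -, rfl, -⟩ := exists_prime_int_of_mem_PdWindow hy
  have ne : a - b ≠ (d : ℤ) := mod_cast hxy
  exact mod_cast Int.pairwise_one_le_dist ne

lemma ncard_PdWindow_two_neighbours_le (h3 : ¬ 3 ∣ d) (m : ℕ) :
    {x ∈ PdWindow d m | x - d ∈ PdWindow d m ∧ x + d ∈ PdWindow d m}.ncard ≤ 6 := by
  set S : Finset ℤ := {3, -3, 3 + (d : ℤ), -3 + (d : ℤ), 3 - (d : ℤ), -3 - (d : ℤ)}
  suffices {x ∈ PdWindow d m | x - d ∈ PdWindow d m ∧ x + d ∈ PdWindow d m} ⊆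
      ((↑) : ℤ → ℝ) '' S from
    (ncard_le_card_of_subset_image this).trans Finset.card_le_six
  rintro x ⟨hx, hsub, hadd⟩
  obtain ⟨a, ha, rfl, -⟩ := exists_prime_int_of_mem_PdWindow hx
  obtain ⟨b, hb, hba, -⟩ := exists_prime_int_of_mem_PdWindow hsub
  obtain ⟨c, hc, hca, -⟩ := exists_prime_int_of_mem_PdWindow hadd
  obtain rfl : b = a - d := mod_cast hba
  obtain rfl : c = a + d := mod_cast hca
  exact ⟨a, mem_of_prime_sub_of_prime_of_prime_add (mod_cast h3) hb ha hc, rfl⟩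

lemma ncard_PdWindow_isolated_le (d m : ℕ) :
    {x ∈ PdWindow d m | x - d ∉ PdWindow d m ∧ x + d ∉ PdWindow d m}.ncard ≤ 2 * d := by
  set S : Finset ℤ := Finset.Ico (-(m : ℤ)) (-m + d) ∪ Finset.Ioc (m - d : ℤ) m with hS
  suffices {x ∈ PdWindow d m | x - d ∉ PdWindow d m ∧ x + d ∉ PdWindow d m} ⊆
      ((↑) : ℤ → ℝ) '' S from
    calc _ ≤ S.card := ncard_le_card_of_subset_image this
      _ ≤ _ := Finset.card_union_le _ _
      _ = 2 * d := by
        simp only [Int.card_Ico, Int.card_Ioc]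
        omega
  rintro x ⟨hx, hsub, hadd⟩
  obtain ⟨a, -, rfl, ha⟩ := exists_prime_int_of_mem_PdWindow hx
  refine ⟨a, ?_, rfl⟩
  simp only [hS, Finset.coe_union, Finset.coe_Ico, Finset.coe_Ioc, mem_union, mem_Ico, mem_Ioc]
  rcases sub_mem_Pd_or_add_mem_Pd hx.1 with h | h
  · have out : ¬ (-(m : ℤ) ≤ a - d ∧ a - d ≤ (m : ℤ)) := fun hw =>
      hsub ⟨h, mod_cast hw.1, mod_cast hw.2⟩
    omega
  · have out : ¬ (-(m : ℤ) ≤ a + d ∧ a + d ≤ (m : ℤ)) := fun hw =>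
      hadd ⟨h, mod_cast hw.1, mod_cast hw.2⟩
    omega

lemma abs_diffCount_PdWindow_sub_le (h3 : ¬ 3 ∣ d) (m : ℕ) :
    |(diffCount (PdWindow d m) (d : ℝ) : ℝ) - 1 / 2 * (PdWindow d m).ncard| ≤ d + 3 := by
  have count := two_mul_diffCount_add_ncard_isolated (PdWindow_finite d m) (d : ℝ)
  have middle := ncard_PdWindow_two_neighbours_le h3 m
  have isolated := ncard_PdWindow_isolated_le d m
  have lower : (PdWindow d m).ncard ≤ 2 * diffCount (PdWindow d m) (d : ℝ) + 2 * d := by omega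
  have upper : 2 * diffCount (PdWindow d m) (d : ℝ) ≤ (PdWindow d m).ncard + 6 := by omega
  rify at lower upper
  rw [abs_le]
  constructor <;> linarith [d.cast_nonneg (α := ℝ)]

theorem tendsto_diffCount_PdWindow_div_ncard (h3 : ¬ 3 ∣ d) (hinf : (Pd d).Infinite) :
    Tendsto (fun m => (diffCount (PdWindow d m) (d : ℝ) : ℝ) / (PdWindow d m).ncard) atTop
      (𝓝 (1 / 2)) :=
  tendsto_div_of_abs_sub_mul_le
    (tendsto_natCast_atTop_atTop.comp (tendsto_ncard_inter_Icc_atTop hinf (PdWindow_finite d)))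
    (.of_forall (abs_diffCount_PdWindow_sub_le h3))

end Window

theorem Pd_counting_autocorrelation_at_d (d : ℕ) (hd : 1 ≤ d) (h3 : ¬ (3 ∣ d))
    (hinf : (Pd d).Infinite)
    (nk : ℕ → ℕ) (hnk : StrictMono nk)
    (γ : Measure ℝ) [IsFiniteMeasureOnCompacts γ]
    (hconv : ∀ f : ℝ → ℂ, Continuous f → HasCompactSupport f →
      Tendsto (fun k => autoCorr (Pd d ∩ Set.Icc (-(nk k : ℝ)) ((nk k : ℝ))) f) atTop
        (nhds (∫ x, f x ∂γ))) :
    γ {(d : ℝ)} = 1/2 ∧ γ ≠ Measure.dirac (0 : ℝ) := by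
  have measureReal_d : γ.real {(d : ℝ)} = 1 / 2 :=
    measureReal_singleton_eq_of_tendsto_autoCorr (fun k => PdWindow_finite d (nk k)) hconv
      zero_lt_one (fun _ _ hx _ hy => one_le_dist_sub_of_mem_PdWindow hx hy)
      ((tendsto_diffCount_PdWindow_div_ncard h3 hinf).comp hnk.tendsto_atTop)
  have d_ne_zero : (d : ℝ) ≠ 0 := by positivity
  refine ⟨?_, ?_⟩
  · rw [← ofReal_measureReal isCompact_singleton.measure_lt_top.ne, measureReal_d]
    simp
  · rintro rfl
    simp [measureReal_def, d_ne_zero.symm] at measureReal_d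
end

section
/- Let d ≥ 1 be an integer and assume ℙ_d is nonempty and finite. Then, writing F_n = ℙ_d ∩ [−n, n], for every continuous compactly supported f : ℝ → ℂ one has (1/card F_n)·Σ_{x,y∈F_n} f(x−y) → (1/card ℙ_d)·Σ_{p,q∈ℙ_d} f(p−q) as n → ∞; moreover the limit measure γ = (1/card ℙ_d)·Σ_{p,q∈ℙ_d} δ_{p−q} satisfies γ({d}) ≥ 1/2, with equality if and only if there is no p such that p, p+d and p+2d all lie in ℙ. -/
open Filter Topology Set MeasureTheory ENNReal

/-- The autocorrelation measure `γ = (1 / card ℙ_d) ∑_{p,q ∈ ℙ_d} δ_{p - q}`. -/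
noncomputable def gammaPd (d : ℕ) : Measure ℝ :=
  (((Pd d).ncard : ℝ≥0∞))⁻¹ • ∑ᶠ p ∈ Pd d, ∑ᶠ q ∈ Pd d, Measure.dirac (p - q)

/-!
Finiteness makes the samples `F_n` equal to `ℙ_d` for all large `n`, which gives the convergence.
For the mass at `d`, let `A` be the set of all `p` with `p, p + d ∈ ℙ`. Then `ℙ_d = A ∪ (A + d)`,
and the pairs of points of `ℙ_d` with difference `d` are exactly the `(p + d, p)` with `p ∈ A`, so
`γ({d}) = |A| / |ℙ_d|`. By inclusion-exclusion `|ℙ_d| + |A ∩ (A + d)| = 2|A|`, and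
`A ∩ (A + d)` consists of the middle terms of the progressions `p, p + d, p + 2d` in `ℙ`.
-/

section Exhaustion

variable {ι α : Type*} {l : Filter ι}

lemma eventually_inter_eq_left_of_finite {S : Set α} (hS : S.Finite) {K : ι → Set α}
    (hK : ∀ x ∈ S, ∀ᶠ i in l, x ∈ K i) : ∀ᶠ i in l, S ∩ K i = S := by
  filter_upwards [(eventually_all_finite hS).2 hK] with i hi
  exact inter_eq_left.2 hi

lemma tendsto_autoCorr_inter {S : Set ℝ} (hS : S.Finite) {K : ι → Set ℝ}
    (hK : ∀ x ∈ S, ∀ᶠ i in l, x ∈ K i) (f : ℝ → ℂ) :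
    Tendsto (fun i => autoCorr (S ∩ K i) f) l (𝓝 (autoCorr S f)) := by
  refine tendsto_const_nhds.congr' ?_
  filter_upwards [eventually_inter_eq_left_of_finite hS hK] with i hi
  rw [hi]

lemma eventually_mem_Icc_neg_natCast (x : ℝ) : ∀ᶠ n : ℕ in atTop, x ∈ Icc (-(n : ℝ)) n := by
  filter_upwards [tendsto_natCast_atTop_atTop.eventually_ge_atTop |x|] with n hn
  exact abs_le.1 hn

end Exhaustion

section AutocorrelationMeasure

variable {G : Type*} [AddCommGroup G] [MeasurableSpace G]

/-- The counting autocorrelation `(1 / card S) ∑_{p, q ∈ S} δ_{p - q}` of a finite set `S`, so that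
`gammaPd d` is the case `S = Pd d`. For infinite `S` it is a junk value, as `S.ncard = 0`. -/
noncomputable def autocorrelationMeasure (S : Set G) : Measure G :=
  (S.ncard : ℝ≥0∞)⁻¹ • ∑ᶠ p ∈ S, ∑ᶠ q ∈ S, Measure.dirac (p - q)

variable [MeasurableSingletonClass G]

lemma sum_dirac_sub_apply_singleton [DecidableEq G] (F : Finset G) (d : G) :
    (∑ p ∈ F, ∑ q ∈ F, Measure.dirac (p - q) : Measure G) {d} =
      ({q ∈ F | q + d ∈ F} : Finset G).card := by
  have dirac_sub_apply (p q : G) :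
      Measure.dirac (p - q) {d} = if p = q + d then (1 : ℝ≥0∞) else 0 := by
    simp [indicator_apply, sub_eq_iff_eq_add']
  simp only [Measure.finsetSum_apply, dirac_sub_apply]
  rw [Finset.sum_comm]
  simp only [Finset.sum_ite_eq', Finset.sum_boole]

lemma autocorrelationMeasure_singleton {S : Set G} (hS : S.Finite) (d : G) :
    autocorrelationMeasure S {d} = ({q ∈ S | q + d ∈ S}.ncard : ℝ≥0∞) / S.ncard := by
  classical
  lift S to Finset G using hS
  have coe_filter : {q ∈ (S : Set G) | q + d ∈ (S : Set G)} =
      (({q ∈ S | q + d ∈ S} : Finset G) : Set G) := by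
    simp only [Finset.coe_filter, Finset.mem_coe]
  simp only [autocorrelationMeasure, finsum_mem_coe_finset, Measure.smul_apply, smul_eq_mul,
    sum_dirac_sub_apply_singleton, coe_filter, ncard_coe_finset]
  rw [mul_comm, div_eq_mul_inv]

end AutocorrelationMeasure

section StepPairs

variable {G : Type*} [AddCommGroup G]

/-- The starting points `x` of the pairs `{x, x + d}` contained in `P`. -/
def stepStarts (P : Set G) (d : G) : Set G := {x | x ∈ P ∧ x + d ∈ P}

/-- The union of the pairs `{x, x + d}` contained in `P`, written so that `Pd d` is
definitionally the case `P = PrimesR`. -/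
def stepPairs (P : Set G) (d : G) : Set G :=
  {x | (x ∈ P ∧ x + d ∈ P) ∨ (x - d ∈ P ∧ x ∈ P)}

variable (P : Set G) (d : G)

lemma image_add_stepStarts : (· + d) '' stepStarts P d = {x | x - d ∈ P ∧ x ∈ P} := by
  ext x
  simp [stepStarts, sub_eq_add_neg]

lemma stepPairs_eq_union : stepPairs P d = stepStarts P d ∪ (· + d) '' stepStarts P d := by
  rw [image_add_stepStarts]
  rfl

lemma sep_add_mem_stepPairs_eq_stepStarts :
    {x ∈ stepPairs P d | x + d ∈ stepPairs P d} = stepStarts P d := by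
  ext x
  simp only [stepPairs, stepStarts, mem_ofPred_eq, add_sub_cancel_right]
  tauto

lemma stepStarts_inter_image_add_eq_empty_iff :
    stepStarts P d ∩ (· + d) '' stepStarts P d = ∅ ↔
      ¬∃ p, p ∈ P ∧ p + d ∈ P ∧ p + 2 • d ∈ P := by
  rw [← not_nonempty_iff_eq_empty, inter_comm, image_inter_nonempty_iff]
  refine not_congr (exists_congr fun p => ?_)
  simp only [stepStarts, mem_inter_iff, mem_preimage, mem_ofPred_eq, two_nsmul, add_assoc]
  tauto

variable {P d}

lemma finite_stepStarts (hS : (stepPairs P d).Finite) : (stepStarts P d).Finite :=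
  hS.subset fun _ => Or.inl

lemma ncard_stepPairs_add_ncard_inter (hS : (stepPairs P d).Finite) :
    (stepPairs P d).ncard + (stepStarts P d ∩ (· + d) '' stepStarts P d).ncard =
      2 * (stepStarts P d).ncard := by
  have hA := finite_stepStarts hS
  rw [stepPairs_eq_union, ncard_union_add_ncard_inter _ _ hA (hA.image _),
    ncard_image_of_injective _ (add_left_injective d), two_mul]

lemma ncard_stepPairs_le (hS : (stepPairs P d).Finite) :
    (stepPairs P d).ncard ≤ 2 * (stepStarts P d).ncard :=
  (Nat.le_add_right _ _).trans_eq (ncard_stepPairs_add_ncard_inter hS)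

lemma ncard_stepPairs_eq_iff (hS : (stepPairs P d).Finite) :
    (stepPairs P d).ncard = 2 * (stepStarts P d).ncard ↔
      ¬∃ p, p ∈ P ∧ p + d ∈ P ∧ p + 2 • d ∈ P := by
  rw [← stepStarts_inter_image_add_eq_empty_iff, ← ncard_stepPairs_add_ncard_inter hS,
    left_eq_add, ncard_eq_zero ((finite_stepStarts hS).inter_of_left _)]

variable [MeasurableSpace G] [MeasurableSingletonClass G]

lemma autocorrelationMeasure_stepPairs_singleton (hS : (stepPairs P d).Finite) :
    autocorrelationMeasure (stepPairs P d) {d} =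
      ((stepStarts P d).ncard : ℝ≥0∞) / (stepPairs P d).ncard := by
  rw [autocorrelationMeasure_singleton hS, sep_add_mem_stepPairs_eq_stepStarts]

end StepPairs

lemma half_le_natCast_div_iff {a b : ℕ} (hb : b ≠ 0) :
    (1 / 2 : ℝ≥0∞) ≤ a / b ↔ b ≤ 2 * a := by
  rw [ENNReal.le_div_iff_mul_le (by simp [hb]) (by simp), one_div,
    ENNReal.inv_mul_le_iff two_ne_zero ofNat_ne_top]
  norm_cast

lemma natCast_div_eq_half_iff {a b : ℕ} (hb : b ≠ 0) :
    (a / b : ℝ≥0∞) = 1 / 2 ↔ b = 2 * a := by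
  rw [ENNReal.div_eq_div_iff two_ne_zero ofNat_ne_top (by simpa) (natCast_ne_top b), mul_one]
  norm_cast
  exact eq_comm

theorem Pd_finite_counting_autocorrelation_general (P : Set ℝ) (d : ℝ)
    (hne : (stepPairs P d).Nonempty) (hfin : (stepPairs P d).Finite) :
    (∀ f : ℝ → ℂ, Tendsto (fun n : ℕ => autoCorr (stepPairs P d ∩ Icc (-(n : ℝ)) n) f) atTop
      (𝓝 (autoCorr (stepPairs P d) f))) ∧
    1 / 2 ≤ autocorrelationMeasure (stepPairs P d) {d} ∧
    (autocorrelationMeasure (stepPairs P d) {d} = 1 / 2 ↔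
      ¬∃ p, p ∈ P ∧ p + d ∈ P ∧ p + 2 * d ∈ P) := by
  have hcard : (stepPairs P d).ncard ≠ 0 := ((ncard_pos hfin).2 hne).ne'
  rw [autocorrelationMeasure_stepPairs_singleton hfin]
  refine ⟨tendsto_autoCorr_inter hfin fun x _ => eventually_mem_Icc_neg_natCast x,
    (half_le_natCast_div_iff hcard).2 (ncard_stepPairs_le hfin), ?_⟩
  rw [natCast_div_eq_half_iff hcard, ncard_stepPairs_eq_iff hfin]
  simp only [nsmul_eq_mul, Nat.cast_ofNat]

theorem Pd_finite_counting_autocorrelation (d : ℕ) (hd : 1 ≤ d)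
    (hne : (Pd d).Nonempty) (hfin : (Pd d).Finite) :
    (∀ f : ℝ → ℂ, Continuous f → HasCompactSupport f →
      Tendsto (fun n : ℕ => autoCorr (Pd d ∩ Set.Icc (-(n : ℝ)) (n : ℝ)) f) atTop
        (nhds (((Pd d).ncard : ℂ)⁻¹ * ∑ᶠ p ∈ Pd d, ∑ᶠ q ∈ Pd d, f (p - q)))) ∧
    (1/2 : ℝ≥0∞) ≤ gammaPd d {(d : ℝ)} ∧
    (gammaPd d {(d : ℝ)} = 1/2 ↔
      ¬ ∃ p : ℝ, p ∈ PrimesR ∧ p + d ∈ PrimesR ∧ p + 2 * d ∈ PrimesR) := by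
  obtain ⟨htendsto, hmass⟩ := Pd_finite_counting_autocorrelation_general PrimesR d hne hfin
  exact ⟨fun f _ _ => htendsto f, hmass⟩
end

section
/- Let (a_n)_{n∈ℕ} be a sequence of real numbers with a_{n+1} − a_n → ∞, and let Λ = {a_n : n ∈ ℕ} ⊆ ℝ. Then Λ has finite local complexity, and for every van Hove sequence (A_n) in ℝ with card(Λ ∩ A_n) → ∞, writing F_n = Λ ∩ A_n, the counting autocorrelation of Λ with respect to (A_n) exists and equals δ_0: for every continuous compactly supported f : ℝ → ℂ, (1/card F_n)·Σ_{x,y∈F_n} f(x−y) → f(0) as n → ∞. -/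
open Filter Topology Set MeasureTheory Pointwise

/-- The `K`-boundary `∂^K A = ((A + K) \ A°) ∪ ((closure(Aᶜ) − K) ∩ A)`. -/
def KBoundary (K A : Set ℝ) : Set ℝ :=
  ((A + K) \ interior A) ∪ ((closure Aᶜ - K) ∩ A)

/-- A van Hove sequence in `ℝ` (with respect to Lebesgue measure): a sequence of
compact sets of positive measure whose `K`-boundaries are asymptotically negligible
for every compact `K`. -/
def IsVanHove (A : ℕ → Set ℝ) : Prop :=
  (∀ n, IsCompact (A n)) ∧ (∀ n, 0 < volume (A n)) ∧
    ∀ K : Set ℝ, IsCompact K →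
      Tendsto (fun n => volume (KBoundary K (A n)) / volume (A n)) atTop (nhds 0)

/-!
Since the gaps tend to infinity, for each `R` only finitely many pairs of distinct points of `Λ`
are within distance `R` of each other; in particular `Λ` has finite local complexity.
In the autocorrelation sum of `F ⊆ Λ` the diagonal contributes exactly `f 0` after normalisation,
while the off-diagonal terms that survive come from the finitely many close pairs of `Λ`, so their
sum is bounded independently of `F` and vanishes in the limit when divided by `F.ncard`.
-/

section GapGrowth

variable {G : Type*} {a : ℕ → G}

lemma eventually_forall_le_apply_le_of_tendsto_atTop [Preorder G]
    (hmono : ∀ᶠ n in atTop, a n ≤ a (n + 1)) (hlim : Tendsto a atTop atTop) :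
    ∀ᶠ m in atTop, ∀ k ≤ m, a k ≤ a m := by
  obtain ⟨N, hN⟩ := eventually_atTop.1 hmono
  have hmonoOn : MonotoneOn a (Ici N) := monotoneOn_nat_Ici_of_le_succ hN
  have hinitial : ∀ᶠ m in atTop, ∀ k ∈ Iio N, a k ≤ a m :=
    (eventually_all_finite (finite_Iio N)).2 fun k _ => hlim.eventually_ge_atTop (a k)
  filter_upwards [hinitial] with m hm k hkm
  rcases lt_or_ge k N with hk | hk
  · exact hm k hk
  · exact hmonoOn hk (hk.trans hkm) hkm

variable [AddCommGroup G] [PartialOrder G] [IsOrderedAddMonoid G]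

lemma eventually_le_succ_of_tendsto_sub_atTop
    (hgap : Tendsto (fun n => a (n + 1) - a n) atTop atTop) :
    ∀ᶠ n in atTop, a n ≤ a (n + 1) :=
  (hgap.eventually_ge_atTop 0).mono fun _ => sub_nonneg.1

lemma tendsto_atTop_of_tendsto_sub_atTop
    (hgap : Tendsto (fun n => a (n + 1) - a n) atTop atTop) : Tendsto a atTop atTop := by
  obtain ⟨N, hN⟩ := eventually_atTop.1 (eventually_le_succ_of_tendsto_sub_atTop hgap)
  have hbelow : ∀ᶠ n in atTop, a N ≤ a n := (eventually_ge_atTop N).mono fun n hn =>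
    monotoneOn_nat_Ici_of_le_succ hN self_mem_Ici hn hn
  have hsucc : Tendsto (fun n => a (n + 1) - a n + a n) atTop atTop :=
    tendsto_atTop_add_right_of_le' _ _ hgap hbelow
  simpa only [sub_add_cancel, tendsto_add_atTop_iff_nat] using hsucc

lemma eventually_forall_lt_le_sub_of_tendsto_sub_atTop
    (hgap : Tendsto (fun n => a (n + 1) - a n) atTop atTop) (R : G) :
    ∀ᶠ m in atTop, ∀ k < m, R ≤ a m - a k := by
  have hmax : ∀ᶠ m in atTop, ∀ k ≤ m, a k ≤ a m :=
    eventually_forall_le_apply_le_of_tendsto_atTop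
      (eventually_le_succ_of_tendsto_sub_atTop hgap) (tendsto_atTop_of_tendsto_sub_atTop hgap)
  rw [← map_add_atTop_eq_nat 1, eventually_map]
  filter_upwards [hmax, hgap.eventually_ge_atTop R] with m hm hR k hk
  exact hR.trans (sub_le_sub_left (hm k (Nat.le_of_lt_succ hk)) _)

end GapGrowth

/-- A subset of a metric space has finitely many close pairs if, for every `R`, only finitely many
ordered pairs of distinct points of it are at distance less than `R`. This is the form in which
sparsity of a point set enters the autocorrelation. -/
def HasFiniteClosePairs {X : Type*} [PseudoMetricSpace X] (Λ : Set X) : Prop :=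
  ∀ R : ℝ, {p ∈ Λ.offDiag | dist p.1 p.2 < R}.Finite

lemma hasFiniteClosePairs_range {X : Type*} [PseudoMetricSpace X] {a : ℕ → X}
    (ha : ∀ R : ℝ, ∀ᶠ m in atTop, ∀ k < m, R ≤ dist (a m) (a k)) :
    HasFiniteClosePairs (range a) := by
  intro R
  obtain ⟨M, hM⟩ := eventually_atTop.1 (ha R)
  have index_lt : ∀ {k m}, k < m → dist (a m) (a k) < R → m < M := fun hkm hdist =>
    lt_of_not_ge fun hMm => hdist.not_ge (hM _ hMm _ hkm)
  refine (((finite_Iio M).image a).prod ((finite_Iio M).image a)).subset ?_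
  rintro ⟨_, _⟩ ⟨⟨⟨i, rfl⟩, ⟨j, rfl⟩, hne⟩, hdist⟩
  rcases lt_trichotomy i j with hij | rfl | hji
  · have hj : j < M := index_lt hij (by rwa [dist_comm])
    exact ⟨mem_image_of_mem a (hij.trans hj), mem_image_of_mem a hj⟩
  · exact absurd rfl hne
  · have hi : i < M := index_lt hji hdist
    exact ⟨mem_image_of_mem a hi, mem_image_of_mem a (hji.trans hi)⟩

lemma hasFiniteClosePairs_range_of_tendsto_sub_atTop {a : ℕ → ℝ}
    (hgap : Tendsto (fun n => a (n + 1) - a n) atTop atTop) :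
    HasFiniteClosePairs (range a) :=
  hasFiniteClosePairs_range fun R =>
    (eventually_forall_lt_le_sub_of_tendsto_sub_atTop hgap R).mono fun _ hm k hk =>
      (hm k hk).trans (le_abs_self _)

namespace HasFiniteClosePairs

variable {E : Type*} [SeminormedAddCommGroup E] {Λ K : Set E}

lemma finite_offDiag_sub_mem (hΛ : HasFiniteClosePairs Λ) (hK : Bornology.IsBounded K) :
    {p ∈ Λ.offDiag | p.1 - p.2 ∈ K}.Finite := by
  obtain ⟨R, hR⟩ := hK.subset_ball 0
  refine (hΛ R).subset fun p hp => ⟨hp.1, ?_⟩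
  rw [dist_eq_norm]
  exact mem_ball_zero_iff.1 (hR hp.2)

lemma finite_sub_inter (hΛ : HasFiniteClosePairs Λ) (hK : Bornology.IsBounded K) :
    ((Λ - Λ) ∩ K).Finite := by
  refine (((hΛ.finite_offDiag_sub_mem hK).image fun p => p.1 - p.2).insert 0).subset ?_
  rintro _ ⟨⟨x, hx, y, hy, rfl⟩, hxyK⟩
  rcases eq_or_ne x y with rfl | hne
  · exact Or.inl (sub_self x)
  · exact Or.inr ⟨(x, y), ⟨⟨hx, hy, hne⟩, hxyK⟩, rfl⟩

end HasFiniteClosePairs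

lemma norm_sum_le_finsum_mem_norm {α E : Type*} [SeminormedAddCommGroup E] {g : α → E}
    {T : Set α} (hT : (T ∩ Function.support g).Finite) {s : Finset α} (hs : (s : Set α) ⊆ T) :
    ‖∑ i ∈ s, g i‖ ≤ ∑ᶠ i ∈ T, ‖g i‖ := by
  have support_norm_subset : (Function.support fun i => ‖g i‖) ⊆ Function.support g :=
    Function.support_comp_subset norm_zero g
  have hTnorm : (T ∩ Function.support fun i => ‖g i‖).Finite :=
    hT.subset (inter_subset_inter_right T support_norm_subset)
  calc ‖∑ i ∈ s, g i‖ ≤ ∑ i ∈ s, ‖g i‖ := norm_sum_le s g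
    _ = ∑ i ∈ s with ‖g i‖ ≠ 0, ‖g i‖ := (Finset.sum_filter_ne_zero s).symm
    _ ≤ ∑ i ∈ hTnorm.toFinset, ‖g i‖ := by
      refine Finset.sum_le_sum_of_subset_of_nonneg (fun i hi => ?_) fun i _ _ => norm_nonneg (g i)
      obtain ⟨his, hgi⟩ := Finset.mem_filter.1 hi
      exact hTnorm.mem_toFinset.2 ⟨hs his, hgi⟩
    _ = ∑ᶠ i ∈ T, ‖g i‖ := (finsum_mem_eq_sum _ hTnorm).symm

lemma autoCorr_coe_finset_sub_apply_zero {s : Finset ℝ} (hs : s.Nonempty) (f : ℝ → ℂ) :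
    autoCorr s f - f 0 = (s.card : ℂ)⁻¹ * ∑ p ∈ s.offDiag, f (p.1 - p.2) := by
  have hcard : (s.card : ℂ) ≠ 0 := Nat.cast_ne_zero.2 hs.card_ne_zero
  have hsplit : ∑ x ∈ s, ∑ y ∈ s, f (x - y) =
      s.card * f 0 + ∑ p ∈ s.offDiag, f (p.1 - p.2) := by
    rw [← Finset.sum_product' s s fun x y => f (x - y), ← Finset.diag_union_offDiag,
      Finset.sum_union (Finset.disjoint_diag_offDiag s), Finset.sum_diag]
    simp only [sub_self, Finset.sum_const, nsmul_eq_mul]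
  simp only [autoCorr, ncard_coe_finset, finsum_mem_coe_finset]
  rw [hsplit, mul_add, inv_mul_cancel_left₀ hcard, add_sub_cancel_left]

namespace HasFiniteClosePairs

variable {Λ : Set ℝ} {f : ℝ → ℂ}

lemma norm_autoCorr_sub_apply_zero_le (hΛ : HasFiniteClosePairs Λ) (hf : HasCompactSupport f)
    {F : Set ℝ} (hFΛ : F ⊆ Λ) (hF : F.Finite) (hF₀ : F.Nonempty) :
    ‖autoCorr F f - f 0‖ ≤ (F.ncard : ℝ)⁻¹ * ∑ᶠ p ∈ Λ.offDiag, ‖f (p.1 - p.2)‖ := by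
  lift F to Finset ℝ using hF
  have hsupport : (Λ.offDiag ∩ Function.support fun p => f (p.1 - p.2)).Finite :=
    (hΛ.finite_offDiag_sub_mem hf.isCompact.isBounded).subset fun _ hp =>
      ⟨hp.1, subset_tsupport f hp.2⟩
  have hoffDiag : (F.offDiag : Set (ℝ × ℝ)) ⊆ Λ.offDiag := by
    rw [Finset.coe_offDiag]
    exact offDiag_mono hFΛ
  rw [autoCorr_coe_finset_sub_apply_zero (Finset.coe_nonempty.1 hF₀), norm_mul, norm_inv,
    Complex.norm_natCast, ncard_coe_finset]
  gcongr
  exact norm_sum_le_finsum_mem_norm hsupport hoffDiag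

lemma tendsto_autoCorr (hΛ : HasFiniteClosePairs Λ) (hf : HasCompactSupport f)
    {ι : Type*} {l : Filter ι} {F : ι → Set ℝ} (hFΛ : ∀ i, F i ⊆ Λ)
    (hcard : Tendsto (fun i => (F i).ncard) l atTop) :
    Tendsto (fun i => autoCorr (F i) f) l (𝓝 (f 0)) := by
  have hbound : ∀ᶠ i in l, ‖autoCorr (F i) f - f 0‖ ≤
      ((F i).ncard : ℝ)⁻¹ * ∑ᶠ p ∈ Λ.offDiag, ‖f (p.1 - p.2)‖ := by
    filter_upwards [hcard.eventually_gt_atTop 0] with i hi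
    exact hΛ.norm_autoCorr_sub_apply_zero_le hf (hFΛ i) (finite_of_ncard_pos hi)
      (nonempty_of_ncard_ne_zero hi.ne')
  have hinv : Tendsto (fun i => ((F i).ncard : ℝ)⁻¹) l (𝓝 0) :=
    tendsto_inv_atTop_zero.comp (tendsto_natCast_atTop_atTop.comp hcard)
  rw [tendsto_iff_norm_sub_tendsto_zero]
  refine squeeze_zero' (Eventually.of_forall fun _ => norm_nonneg _) hbound ?_
  simpa only [zero_mul] using hinv.mul_const (∑ᶠ p ∈ Λ.offDiag, ‖f (p.1 - p.2)‖)

end HasFiniteClosePairs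

theorem sparse_sequence_counting_autocorrelation_general
    (a : ℕ → ℝ) (hgap : Tendsto (fun n => a (n + 1) - a n) atTop atTop) :
    (∀ K : Set ℝ, IsCompact K → ((range a - range a) ∩ K).Finite) ∧
    ∀ {ι : Type*} {l : Filter ι} (F : ι → Set ℝ), (∀ i, F i ⊆ range a) →
      Tendsto (fun i => (F i).ncard) l atTop →
      ∀ f : ℝ → ℂ, HasCompactSupport f →
        Tendsto (fun i => autoCorr (F i) f) l (𝓝 (f 0)) :=
  have hΛ : HasFiniteClosePairs (range a) := hasFiniteClosePairs_range_of_tendsto_sub_atTop hgap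
  ⟨fun _ hK => hΛ.finite_sub_inter hK.isBounded,
    fun _ hFΛ hcard _ hf => hΛ.tendsto_autoCorr hf hFΛ hcard⟩

theorem sparse_sequence_counting_autocorrelation
    (a : ℕ → ℝ) (hgap : Tendsto (fun n => a (n + 1) - a n) atTop atTop) :
    (∀ K : Set ℝ, IsCompact K → ((Set.range a - Set.range a) ∩ K).Finite) ∧
    ∀ A : ℕ → Set ℝ, IsVanHove A →
      Tendsto (fun n => (Set.range a ∩ A n).ncard) atTop atTop →
      ∀ f : ℝ → ℂ, Continuous f → HasCompactSupport f →
        Tendsto (fun n => autoCorr (Set.range a ∩ A n) f) atTop (nhds (f 0)) := by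
  obtain ⟨hflc, hcorr⟩ := sparse_sequence_counting_autocorrelation_general a hgap
  exact ⟨hflc, fun A _ hcard f _ hf => hcorr _ (fun _ => inter_subset_left) hcard f hf⟩
end

section
/- Let Λ ⊆ ℝ be uniformly discrete and let A_n = [a_n, b_n] be compact intervals with b_n − a_n → ∞ such that card(F_n) → ∞, where F_n = Λ ∩ A_n. Then for every t ∈ ℝ, (card(Λ ∩ (−t + Λ) ∩ A_n) − card(F_n ∩ (−t + F_n)))/card(F_n) → 0 as n → ∞. -/
open Filter Topology Set

/-- A set `Λ ⊆ ℝ` is uniformly discrete if distinct points are separated by at least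
some fixed `r > 0`. -/
def UnifDiscR (Λ : Set ℝ) : Prop :=
  ∃ r : ℝ, 0 < r ∧ ∀ x ∈ Λ, ∀ y ∈ Λ, x ≠ y → r ≤ |x - y|

/-!
The two counts differ by the number of points `x ∈ Λ ∩ [a, b]` for which `t + x` lies in `Λ` but
has left `[a, b]`. Such an `x` is within `|t|` of an endpoint of the window, and a set with
separation `r` has at most `⌊|t| / r⌋ + 1` points in an interval of length `|t|`. Hence the
difference is bounded independently of the window, while the denominator tends to infinity.
-/

/-- The intersection `Λ ∩ (-t + Λ)`: the points of `Λ` that return to `Λ` under translation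
by `t`. Its points in a window are what the autocorrelation of `Λ` at `t` counts. -/
def returnSet {G : Type*} [Add G] (Λ : Set G) (t : G) : Set G :=
  {x | x ∈ Λ ∧ t + x ∈ Λ}

theorem returnSet_inter_subset {G : Type*} [Add G] (Λ W : Set G) (t : G) :
    returnSet (Λ ∩ W) t ⊆ returnSet Λ t ∩ W :=
  fun _ hx => ⟨⟨hx.1.1, hx.2.1⟩, hx.1.2⟩

theorem returnSet_inter_Icc_diff_subset {G : Type*} [AddCommGroup G] [LinearOrder G]
    [IsOrderedAddMonoid G] (Λ : Set G) (a b t : G) :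
    (returnSet Λ t ∩ Icc a b) \ returnSet (Λ ∩ Icc a b) t ⊆
      Λ ∩ Icc a (a + |t|) ∪ Λ ∩ Icc (b - |t|) b := by
  rintro x ⟨⟨⟨hx, htx⟩, hax, hxb⟩, hexit⟩
  have hout : t + x < a ∨ b < t + x := by
    by_contra! hin
    exact hexit ⟨⟨hx, hax, hxb⟩, htx, hin⟩
  rcases hout with hleft | hright
  · refine Or.inl ⟨hx, hax, ?_⟩
    calc x = (t + x) + -t := by abel
      _ ≤ a + |t| := add_le_add hleft.le (neg_le_abs t)
  · refine Or.inr ⟨hx, ?_, hxb⟩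
    calc b - |t| ≤ (t + x) - t := sub_le_sub hright.le (le_abs_self t)
      _ = x := add_sub_cancel_left t x

section Separated

variable {K : Type*} [Field K] [LinearOrder K] [IsStrictOrderedRing K] [FloorRing K]
  {Λ : Set K} {r : K}

theorem injOn_floor_sub_div_of_separated (hr : 0 < r)
    (hΛ : Λ.Pairwise fun x y => r ≤ |x - y|) (c : K) :
    InjOn (fun x => ⌊(x - c) / r⌋) Λ := by
  intro x hx y hy hfloor
  by_contra hne
  have hlt : |(x - c) / r - (y - c) / r| < 1 := Int.abs_sub_lt_one_of_floor_eq_floor hfloor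
  rw [← sub_div, sub_sub_sub_cancel_right, abs_div, abs_of_pos hr, div_lt_one hr] at hlt
  exact (hΛ hx hy hne).not_gt hlt

theorem mapsTo_floor_sub_div_Icc (hr : 0 < r) (c d : K) :
    MapsTo (fun x => ⌊(x - c) / r⌋) (Icc c d) (Icc 0 ⌊(d - c) / r⌋) :=
  fun _ hx => ⟨Int.floor_nonneg.2 (div_nonneg (sub_nonneg.2 hx.1) hr.le),
    Int.floor_le_floor (div_le_div_of_nonneg_right (sub_le_sub_right hx.2 c) hr.le)⟩

theorem finite_inter_Icc_of_separated (hr : 0 < r)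
    (hΛ : Λ.Pairwise fun x y => r ≤ |x - y|) (c d : K) : (Λ ∩ Icc c d).Finite :=
  Finite.of_injOn ((mapsTo_floor_sub_div_Icc hr c d).mono_left inter_subset_right)
    ((injOn_floor_sub_div_of_separated hr hΛ c).mono inter_subset_left) (finite_Icc _ _)

theorem ncard_inter_Icc_le_of_separated (hr : 0 < r)
    (hΛ : Λ.Pairwise fun x y => r ≤ |x - y|) (c d : K) :
    (Λ ∩ Icc c d).ncard ≤ (⌊(d - c) / r⌋ + 1).toNat := by
  calc (Λ ∩ Icc c d).ncard ≤ (Icc 0 ⌊(d - c) / r⌋).ncard :=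
        ncard_le_ncard_of_injOn _
          ((mapsTo_floor_sub_div_Icc hr c d).mono_left inter_subset_right)
          ((injOn_floor_sub_div_of_separated hr hΛ c).mono inter_subset_left) (finite_Icc _ _)
    _ = (⌊(d - c) / r⌋ + 1).toNat := by
        rw [← Finset.coe_Icc, ncard_coe_finset, Int.card_Icc, sub_zero]

theorem ncard_returnSet_inter_Icc_diff_le (hr : 0 < r)
    (hΛ : Λ.Pairwise fun x y => r ≤ |x - y|) (a b t : K) :
    ((returnSet Λ t ∩ Icc a b) \ returnSet (Λ ∩ Icc a b) t).ncard ≤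
      2 * (⌊|t| / r⌋ + 1).toNat := by
  have hleft : (Λ ∩ Icc a (a + |t|)).ncard ≤ (⌊|t| / r⌋ + 1).toNat := by
    simpa only [add_sub_cancel_left] using ncard_inter_Icc_le_of_separated hr hΛ a (a + |t|)
  have hright : (Λ ∩ Icc (b - |t|) b).ncard ≤ (⌊|t| / r⌋ + 1).toNat := by
    simpa only [sub_sub_cancel] using ncard_inter_Icc_le_of_separated hr hΛ (b - |t|) b
  calc _ ≤ (Λ ∩ Icc a (a + |t|) ∪ Λ ∩ Icc (b - |t|) b).ncard :=
        ncard_le_ncard (returnSet_inter_Icc_diff_subset Λ a b t)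
          ((finite_inter_Icc_of_separated hr hΛ _ _).union
            (finite_inter_Icc_of_separated hr hΛ _ _))
    _ ≤ (Λ ∩ Icc a (a + |t|)).ncard + (Λ ∩ Icc (b - |t|) b).ncard := ncard_union_le _ _
    _ ≤ 2 * (⌊|t| / r⌋ + 1).toNat := by lia

theorem counting_autocorrelation_window_comparison_general {ι : Type*} {l : Filter ι}
    (hr : 0 < r) (hΛ : Λ.Pairwise fun x y => r ≤ |x - y|) (a b : ι → K)
    (hcard : Tendsto (fun i => (Λ ∩ Icc (a i) (b i)).ncard) l atTop) (t : K) :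
    Tendsto (fun i =>
        (((returnSet Λ t ∩ Icc (a i) (b i)).ncard : ℝ) -
          ((returnSet (Λ ∩ Icc (a i) (b i)) t).ncard : ℝ)) /
        ((Λ ∩ Icc (a i) (b i)).ncard : ℝ)) l (𝓝 0) := by
  have hdiff (i : ι) : ((returnSet Λ t ∩ Icc (a i) (b i)).ncard : ℝ) -
      ((returnSet (Λ ∩ Icc (a i) (b i)) t).ncard : ℝ) =
      (((returnSet Λ t ∩ Icc (a i) (b i)) \ returnSet (Λ ∩ Icc (a i) (b i)) t).ncard : ℝ) :=
    (cast_ncard_sdiff (returnSet_inter_subset Λ _ t)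
      ((finite_inter_Icc_of_separated hr hΛ _ _).subset
        (inter_subset_inter_left _ fun _ hx => hx.1))).symm
  have hbound : Tendsto (fun i => ((2 * (⌊|t| / r⌋ + 1).toNat : ℕ) : ℝ) /
      ((Λ ∩ Icc (a i) (b i)).ncard : ℝ)) l (𝓝 0) :=
    (tendsto_natCast_atTop_atTop.comp hcard).const_div_atTop _
  simp only [hdiff]
  refine squeeze_zero (fun i => by positivity) (fun i => ?_) hbound
  gcongr
  exact ncard_returnSet_inter_Icc_diff_le hr hΛ (a i) (b i) t

end Separated

theorem counting_autocorrelation_window_comparison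
    (Λ : Set ℝ) (hΛ : UnifDiscR Λ) (a b : ℕ → ℝ)
    (hw : Tendsto (fun n => b n - a n) atTop atTop)
    (hcard : Tendsto (fun n => (Λ ∩ Set.Icc (a n) (b n)).ncard) atTop atTop) :
    ∀ t : ℝ,
      Tendsto (fun n =>
          ((({x | x ∈ Λ ∧ t + x ∈ Λ} ∩ Set.Icc (a n) (b n)).ncard : ℝ) -
            ({x | x ∈ Λ ∩ Set.Icc (a n) (b n) ∧
              t + x ∈ Λ ∩ Set.Icc (a n) (b n)}.ncard : ℝ)) /
          ((Λ ∩ Set.Icc (a n) (b n)).ncard : ℝ)) atTop (nhds 0) := by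
  obtain ⟨r, hr, hsep⟩ := hΛ
  exact counting_autocorrelation_window_comparison_general hr
    (fun x hx y hy hne => hsep x hx y hy hne) a b hcard
end

section
/- Let A_n = [a_n, b_n] be compact intervals in ℝ with b_n − a_n → ∞, and let Λ ⊆ ℝ be uniformly discrete with card(Λ ∩ A_n) → ∞, such that the counting autocorrelation of Λ with respect to (A_n) exists and equals δ_0 (i.e., writing F_n = Λ ∩ A_n, for every continuous compactly supported f : ℝ → ℂ, (1/card F_n)·Σ_{x,y∈F_n} f(x−y) → f(0)). Then for every nonzero integer k, the set Γ = Λ ∪ (k + Λ) has counting autocorrelation δ_0 + (δ_k + δ_{−k})/2 with respect to (A_n): writing E_n = Γ ∩ A_n, for every continuous compactly supported f : ℝ → ℂ, (1/card E_n)·Σ_{x,y∈E_n} f(x−y) → f(0) + (f(k) + f(−k))/2 as n → ∞. -/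
open Filter Topology Set

/-!
Write `F = Λ ∩ [a, b]` and `E = Γ ∩ [a, b]`. Then `E` agrees with `F ∪ (κ + F)` except for points
within `|κ|` of `a` or `b`, of which there is a bounded number. The overlap `F ∩ (κ + F)` counts
the pairs of points of `F` at difference exactly `κ`; testing the autocorrelation `δ₀` of `Λ` on a
bump at `κ` that vanishes at `0` shows that this count is `o(#F)`. So up to `o(#F)` points `E` is
the disjoint union of `F` and `κ + F`, and each point adds a bounded amount to the correlation sum.
Hence the sum over `E × E` splits into four sums over `F × F`, with test functions `f`, `f (· - κ)`,
`f (· + κ)`, `f`, while `#E ~ 2 #F`.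
-/

open Asymptotics
open scoped Finset symmDiff

section UnionDefect

variable {α : Type*} {V : Type*} [SeminormedAddCommGroup V]

lemma norm_sum_le_card_mul (s : Finset α) {g : α → V} {c : ℝ} (hg : ∀ x, ‖g x‖ ≤ c) :
    ‖∑ x ∈ s, g x‖ ≤ #s * c := by
  simpa using norm_sum_le_of_le s fun x _ => hg x

variable [DecidableEq α]

lemma norm_sum_sub_sum_le_card_symmDiff_mul (s t : Finset α) {g : α → V} {c : ℝ}
    (hg : ∀ x, ‖g x‖ ≤ c) :
    ‖∑ x ∈ s, g x - ∑ x ∈ t, g x‖ ≤ #(s ∆ t) * c := by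
  have hcard : #(s ∆ t) = #(s \ t) + #(t \ s) :=
    Finset.card_union_of_disjoint disjoint_sdiff_sdiff
  calc ‖∑ x ∈ s, g x - ∑ x ∈ t, g x‖
      = ‖∑ x ∈ s \ t, g x - ∑ x ∈ t \ s, g x‖ := by rw [Finset.sum_sdiff_sub_sum_sdiff]
    _ ≤ ‖∑ x ∈ s \ t, g x‖ + ‖∑ x ∈ t \ s, g x‖ := norm_sub_le _ _
    _ ≤ #(s \ t) * c + #(t \ s) * c :=
        add_le_add (norm_sum_le_card_mul _ hg) (norm_sum_le_card_mul _ hg)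
    _ = #(s ∆ t) * c := by rw [hcard]; push_cast; ring

/-- The number of points by which the finite set `E` fails to be the disjoint union of `s` and `t`:
the overlap of `s` and `t` together with the symmetric difference of `E` and `s ∪ t`. -/
def unionDefect (E s t : Finset α) : ℕ :=
  #(s ∩ t) + #(E ∆ (s ∪ t))

lemma norm_sum_sub_add_le_unionDefect_mul (E s t : Finset α) {g : α → V} {c : ℝ}
    (hg : ∀ x, ‖g x‖ ≤ c) :
    ‖∑ x ∈ E, g x - (∑ x ∈ s, g x + ∑ x ∈ t, g x)‖ ≤ unionDefect E s t * c := by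
  calc ‖∑ x ∈ E, g x - (∑ x ∈ s, g x + ∑ x ∈ t, g x)‖
      = ‖(∑ x ∈ E, g x - ∑ x ∈ s ∪ t, g x) - ∑ x ∈ s ∩ t, g x‖ := by
        rw [← Finset.sum_union_inter, sub_sub]
    _ ≤ ‖∑ x ∈ E, g x - ∑ x ∈ s ∪ t, g x‖ + ‖∑ x ∈ s ∩ t, g x‖ := norm_sub_le _ _
    _ ≤ #(E ∆ (s ∪ t)) * c + #(s ∩ t) * c :=
        add_le_add (norm_sum_sub_sum_le_card_symmDiff_mul _ _ hg) (norm_sum_le_card_mul _ hg)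
    _ = unionDefect E s t * c := by rw [unionDefect]; push_cast; ring

end UnionDefect

section CorrSum

variable {G : Type*} [AddCommGroup G] {M : Type*} [AddCommMonoid M]
  {V : Type*} [SeminormedAddCommGroup V]

/-- The correlation sum `∑ f (x - y)` over `x ∈ s` and `y ∈ t`; the autocorrelation of `s` is
`corrSum s s f` divided by the number of points of `s`. -/
def corrSum (s t : Finset G) (f : G → M) : M :=
  ∑ x ∈ s, ∑ y ∈ t, f (x - y)

lemma autoCorr_coe (s : Finset ℝ) (f : ℝ → ℂ) :
    autoCorr (s : Set ℝ) f = corrSum s s f / #s := by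
  simp only [autoCorr, corrSum, ncard_coe_finset, div_eq_inv_mul, finsum_mem_coe_finset]

lemma corrSum_comm (s t : Finset G) (f : G → M) :
    corrSum s t f = corrSum t s (fun z => f (-z)) := by
  simp only [corrSum, neg_sub]
  exact Finset.sum_comm

lemma corrSum_map_right (s t : Finset G) (κ : G) (f : G → M) :
    corrSum s (t.map (addLeftEmbedding κ)) f = corrSum s t (fun z => f (z - κ)) := by
  simp only [corrSum, Finset.sum_map, addLeftEmbedding_apply, sub_sub, add_comm κ]

lemma corrSum_map_left (s t : Finset G) (κ : G) (f : G → M) :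
    corrSum (s.map (addLeftEmbedding κ)) t f = corrSum s t (fun z => f (z + κ)) := by
  simp only [corrSum, Finset.sum_map, addLeftEmbedding_apply, add_sub_assoc, add_comm κ,
    sub_add_eq_add_sub]

variable [DecidableEq G]

lemma norm_corrSum_sub_add_left_le (E s t u : Finset G) {f : G → V} {c : ℝ}
    (hu : ∀ x, ‖∑ y ∈ u, f (x - y)‖ ≤ c) :
    ‖corrSum E u f - (corrSum s u f + corrSum t u f)‖ ≤ unionDefect E s t * c :=
  norm_sum_sub_add_le_unionDefect_mul E s t hu

lemma norm_corrSum_sub_add_right_le (E s t u : Finset G) {f : G → V} {c : ℝ}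
    (hu : ∀ x, ‖∑ y ∈ u, f (-(x - y))‖ ≤ c) :
    ‖corrSum u E f - (corrSum u s f + corrSum u t f)‖ ≤ unionDefect E s t * c := by
  simpa only [corrSum_comm u] using norm_corrSum_sub_add_left_le E s t u hu

lemma norm_corrSum_self_sub_le (E s t : Finset G) {f : G → V} {c : ℝ}
    (hE : ∀ x, ‖∑ y ∈ E, f (x - y)‖ ≤ c) (hs : ∀ x, ‖∑ y ∈ s, f (-(x - y))‖ ≤ c)
    (ht : ∀ x, ‖∑ y ∈ t, f (-(x - y))‖ ≤ c) :
    ‖corrSum E E f - ((corrSum s s f + corrSum s t f) + (corrSum t s f + corrSum t t f))‖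
      ≤ 3 * c * unionDefect E s t := by
  calc ‖corrSum E E f - ((corrSum s s f + corrSum s t f) + (corrSum t s f + corrSum t t f))‖
      = ‖(corrSum E E f - (corrSum s E f + corrSum t E f))
          + (corrSum s E f - (corrSum s s f + corrSum s t f))
          + (corrSum t E f - (corrSum t s f + corrSum t t f))‖ := by congr 1; abel
    _ ≤ unionDefect E s t * c + unionDefect E s t * c + unionDefect E s t * c :=
        norm_add₃_le.trans <| add_le_add_three (norm_corrSum_sub_add_left_le E s t E hE)
          (norm_corrSum_sub_add_right_le E s t s hs) (norm_corrSum_sub_add_right_le E s t t ht)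
    _ = 3 * c * unionDefect E s t := by ring

lemma card_inter_map_addLeft_le_corrSum (s : Finset G) {κ : G} {h : G → ℝ}
    (h_nonneg : ∀ z, 0 ≤ h z) (hκ : 1 ≤ h κ) :
    (#(s ∩ s.map (addLeftEmbedding κ)) : ℝ) ≤ corrSum s s h := by
  have one_le_slice : ∀ x ∈ s ∩ s.map (addLeftEmbedding κ), 1 ≤ ∑ y ∈ s, h (x - y) := by
    intro x hx
    obtain ⟨y, hy, rfl⟩ := Finset.mem_map.1 (Finset.mem_inter.1 hx).2
    calc 1 ≤ h (addLeftEmbedding κ y - y) := by simpa using hκ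
      _ ≤ _ := Finset.single_le_sum (f := fun z => h (addLeftEmbedding κ y - z))
        (fun z _ => h_nonneg _) hy
  calc (#(s ∩ s.map (addLeftEmbedding κ)) : ℝ)
      ≤ ∑ x ∈ s ∩ s.map (addLeftEmbedding κ), ∑ y ∈ s, h (x - y) := by
        simpa using Finset.card_nsmul_le_sum _ _ 1 one_le_slice
    _ ≤ corrSum s s h := Finset.sum_le_sum_of_subset_of_nonneg Finset.inter_subset_left
        fun x _ _ => Finset.sum_nonneg fun y _ => h_nonneg _

end CorrSum

/-- A set of reals is uniformly locally finite if, for each `L`, the number of its points in a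
closed interval of length `L` is bounded independently of the interval. The use of `encard` makes
the bound include finiteness. -/
def UniformlyLocallyFinite (S : Set ℝ) : Prop :=
  ∀ L : ℝ, ∃ C : ℕ, ∀ p : ℝ, (S ∩ Icc p (p + L)).encard ≤ C

lemma UnifDiscR.uniformlyLocallyFinite {Λ : Set ℝ} (hΛ : UnifDiscR Λ) :
    UniformlyLocallyFinite Λ := by
  obtain ⟨r, hr, hsep⟩ := hΛ
  intro L
  refine ⟨#(Finset.Icc (0 : ℤ) ⌊L / r⌋), fun p => ?_⟩
  have maps : MapsTo (fun x => ⌊(x - p) / r⌋) (Λ ∩ Icc p (p + L))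
      (Finset.Icc (0 : ℤ) ⌊L / r⌋ : Finset ℤ) := by
    rintro x ⟨-, hpx, hxp⟩
    rw [Finset.mem_coe, Finset.mem_Icc]
    exact ⟨Int.floor_nonneg.2 (div_nonneg (sub_nonneg.2 hpx) hr.le),
      Int.floor_le_floor (by gcongr; linarith)⟩
  have inj : InjOn (fun x => ⌊(x - p) / r⌋) (Λ ∩ Icc p (p + L)) := by
    intro x hx y hy hxy
    by_contra hne
    have hlt := Int.abs_sub_lt_one_of_floor_eq_floor hxy
    rw [← sub_div, sub_sub_sub_cancel_right, abs_div, abs_of_pos hr, div_lt_one hr] at hlt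
    exact hlt.not_ge (hsep x hx.1 y hy.1 hne)
  simpa only [encard_coe_eq_coe_finsetCard] using encard_le_encard_of_injOn maps inj

namespace UniformlyLocallyFinite

variable {S T : Set ℝ}

lemma union (hS : UniformlyLocallyFinite S) (hT : UniformlyLocallyFinite T) :
    UniformlyLocallyFinite (S ∪ T) := by
  intro L
  obtain ⟨C, hC⟩ := hS L
  obtain ⟨D, hD⟩ := hT L
  refine ⟨C + D, fun p => ?_⟩
  rw [union_inter_distrib_right, Nat.cast_add]
  exact (encard_union_le _ _).trans (add_le_add (hC p) (hD p))

lemma image_add_left (hS : UniformlyLocallyFinite S) (κ : ℝ) :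
    UniformlyLocallyFinite ((fun x => κ + x) '' S) := by
  intro L
  obtain ⟨C, hC⟩ := hS L
  refine ⟨C, fun p => ?_⟩
  have preimage_Icc : (fun x => κ + x) ⁻¹' Icc p (p + L) = Icc (p - κ) (p - κ + L) := by
    rw [preimage_const_add_Icc, sub_add_eq_add_sub]
  rw [← image_inter_preimage, preimage_Icc, (add_right_injective κ).encard_image]
  exact hC (p - κ)

lemma finite_inter_Icc (hS : UniformlyLocallyFinite S) (a b : ℝ) : (S ∩ Icc a b).Finite := by
  obtain ⟨C, hC⟩ := hS (b - a)
  simpa using finite_of_encard_le_coe (hC a)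

lemma exists_norm_sum_sub_le {V : Type*} [NormedAddCommGroup V] (hS : UniformlyLocallyFinite S)
    {f : ℝ → V} (hf : Continuous f) (hcs : HasCompactSupport f) :
    ∃ c : ℝ, ∀ s : Finset ℝ, (s : Set ℝ) ⊆ S → ∀ x, ‖∑ y ∈ s, f (x - y)‖ ≤ c := by
  obtain ⟨B, hB⟩ := hcs.exists_bound_of_continuous hf
  obtain ⟨R, hR⟩ := hcs.isCompact.isBounded.subset_closedBall 0
  obtain ⟨C, hC⟩ := hS (2 * R)
  refine ⟨C * B, fun s hs x => ?_⟩
  have hB_nonneg : 0 ≤ B := (norm_nonneg _).trans (hB 0)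
  have mem_window : ∀ y, f (x - y) ≠ 0 → y ∈ Icc (x - R) (x - R + 2 * R) := by
    intro y hy
    have hxy := hR (subset_tsupport f hy)
    rw [mem_closedBall_zero_iff, Real.norm_eq_abs, abs_le] at hxy
    constructor <;> linarith
  have card_window : #{y ∈ s | y ∈ Icc (x - R) (x - R + 2 * R)} ≤ C := by
    have hsub : (({y ∈ s | y ∈ Icc (x - R) (x - R + 2 * R)} : Finset ℝ) : Set ℝ)
        ⊆ S ∩ Icc (x - R) (x - R + 2 * R) := by
      rw [Finset.coe_filter]
      exact fun y hy => ⟨hs hy.1, hy.2⟩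
    exact_mod_cast (encard_coe_eq_coe_finsetCard _).symm.trans_le
      ((encard_le_encard hsub).trans (hC _))
  rw [← Finset.sum_filter_of_ne fun y _ => mem_window y]
  calc ‖∑ y ∈ s with y ∈ Icc (x - R) (x - R + 2 * R), f (x - y)‖
      ≤ #{y ∈ s | y ∈ Icc (x - R) (x - R + 2 * R)} * B :=
        norm_sum_le_card_mul _ fun y => hB (x - y)
    _ ≤ C * B := by gcongr

end UniformlyLocallyFinite

lemma image_add_inter_Icc_symmDiff_subset (S : Set ℝ) (κ a b : ℝ) :
    (((fun x => κ + x) '' S) ∩ Icc a b) ∆ ((fun x => κ + x) '' (S ∩ Icc a b)) ⊆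
      ((fun x => κ + x) '' S) ∩ Icc (a - |κ|) (a - |κ| + 2 * |κ|) ∪
        ((fun x => κ + x) '' S) ∩ Icc (b - |κ|) (b - |κ| + 2 * |κ|) := by
  have hle := le_abs_self κ
  have hge := neg_abs_le κ
  rintro _ (⟨⟨⟨x, hx, rfl⟩, ha, hb⟩, hout⟩ | ⟨⟨x, ⟨hx, ha, hb⟩, rfl⟩, hout⟩)
  · have hx_out : ¬(a ≤ x ∧ x ≤ b) := fun hab => hout ⟨x, ⟨hx, hab⟩, rfl⟩
    rcases not_and_or.1 hx_out with hxa | hxb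
    · exact Or.inl ⟨⟨x, hx, rfl⟩, by constructor <;> linarith⟩
    · exact Or.inr ⟨⟨x, hx, rfl⟩, by constructor <;> linarith⟩
  · have hx_out : ¬(a ≤ κ + x ∧ κ + x ≤ b) := fun hab => hout ⟨⟨x, hx, rfl⟩, hab⟩
    rcases not_and_or.1 hx_out with hxa | hxb
    · exact Or.inl ⟨⟨x, hx, rfl⟩, by constructor <;> linarith⟩
    · exact Or.inr ⟨⟨x, hx, rfl⟩, by constructor <;> linarith⟩

lemma UniformlyLocallyFinite.exists_card_symmDiff_le {S : Set ℝ} (hS : UniformlyLocallyFinite S)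
    (κ : ℝ) :
    ∃ C : ℕ, ∀ (a b : ℝ) (E F : Finset ℝ), (E : Set ℝ) = (S ∪ (fun x => κ + x) '' S) ∩ Icc a b →
      (F : Set ℝ) = S ∩ Icc a b → #(E ∆ (F ∪ F.map (addLeftEmbedding κ))) ≤ C := by
  obtain ⟨C, hC⟩ := hS.image_add_left κ (2 * |κ|)
  refine ⟨C + C, fun a b E F hE hF => ?_⟩
  have hcoe : ((E ∆ (F ∪ F.map (addLeftEmbedding κ)) : Finset ℝ) : Set ℝ) ⊆
      (((fun x => κ + x) '' S) ∩ Icc a b) ∆ ((fun x => κ + x) '' (S ∩ Icc a b)) := by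
    rw [Finset.coe_symmDiff, Finset.coe_union, Finset.coe_map, hE, hF, union_inter_distrib_right]
    exact union_symmDiff_union_subset.trans (by simp)
  have hsub := hcoe.trans (image_add_inter_Icc_symmDiff_subset S κ a b)
  have hencard := (encard_le_encard hsub).trans
    ((encard_union_le _ _).trans (add_le_add (hC _) (hC _)))
  rw [encard_coe_eq_coe_finsetCard] at hencard
  exact_mod_cast hencard

section Limits

variable {ι : Type*} {l : Filter ι} {E F : ι → Finset ℝ} {κ : ℝ}

lemma isLittleO_card_inter_map_addLeft (hκ : κ ≠ 0)
    (hauto : ∀ f : ℝ → ℂ, Continuous f → HasCompactSupport f →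
      Tendsto (fun n => autoCorr (F n) f) l (𝓝 (f 0))) :
    (fun n => (#(F n ∩ (F n).map (addLeftEmbedding κ)) : ℝ)) =o[l] fun n => (#(F n) : ℝ) := by
  obtain ⟨h, h_one, h_zero, h_cs, h_Icc⟩ := exists_continuous_one_zero_of_isCompact
    (isCompact_singleton (x := κ)) (isClosed_singleton (x := (0 : ℝ)))
    (disjoint_singleton.2 hκ)
  have h_nonneg : ∀ z, 0 ≤ h z := fun z => (h_Icc z).1
  have norm_autoCorr : ∀ n,
      ‖autoCorr (F n) (fun z => (h z : ℂ))‖ = corrSum (F n) (F n) h / #(F n) := by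
    intro n
    have corrSum_nonneg : 0 ≤ corrSum (F n) (F n) h :=
      Finset.sum_nonneg fun x _ => Finset.sum_nonneg fun y _ => h_nonneg _
    have ofReal_corrSum :
        corrSum (F n) (F n) (fun z => (h z : ℂ)) = (corrSum (F n) (F n) h : ℝ) := by
      simp [corrSum]
    rw [autoCorr_coe, ofReal_corrSum, norm_div, Complex.norm_natCast,
      Complex.norm_of_nonneg corrSum_nonneg]
  have autoCorr_tendsto : Tendsto (fun n => corrSum (F n) (F n) h / (#(F n) : ℝ)) l (𝓝 0) := by
    have := (hauto (fun z => (h z : ℂ)) (by fun_prop)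
      (h_cs.comp_left Complex.ofReal_zero)).norm
    simpa only [norm_autoCorr, h_zero (mem_singleton 0), Pi.zero_apply, Complex.ofReal_zero,
      norm_zero] using this
  refine isLittleO_of_tendsto (fun n hn => ?_) (squeeze_zero (fun n => by positivity)
    (fun n => ?_) autoCorr_tendsto)
  · have hF : F n = ∅ := by simpa using hn
    simp [hF]
  · gcongr
    exact card_inter_map_addLeft_le_corrSum _ h_nonneg (h_one (mem_singleton κ)).ge

lemma isLittleO_unionDefect {S : Set ℝ} (hS : UniformlyLocallyFinite S) {a b : ι → ℝ}
    (hE : ∀ n, (E n : Set ℝ) = (S ∪ (fun x => κ + x) '' S) ∩ Icc (a n) (b n))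
    (hF : ∀ n, (F n : Set ℝ) = S ∩ Icc (a n) (b n))
    (hcard : Tendsto (fun n => #(F n)) l atTop) (hκ : κ ≠ 0)
    (hauto : ∀ f : ℝ → ℂ, Continuous f → HasCompactSupport f →
      Tendsto (fun n => autoCorr (F n) f) l (𝓝 (f 0))) :
    (fun n => (unionDefect (E n) (F n) ((F n).map (addLeftEmbedding κ)) : ℝ))
      =o[l] fun n => (#(F n) : ℂ) := by
  obtain ⟨C, hC⟩ := hS.exists_card_symmDiff_le κ
  have boundary_isBigO : (fun n => (#(E n ∆ (F n ∪ (F n).map (addLeftEmbedding κ))) : ℝ))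
      =O[l] fun _ => (1 : ℝ) :=
    .of_bound C <| .of_forall fun n => by simpa using hC _ _ _ _ (hE n) (hF n)
  have one_isLittleO : (fun _ => (1 : ℝ)) =o[l] fun n => (#(F n) : ℝ) :=
    isLittleO_const_left.2 <| .inr <| tendsto_norm_atTop_atTop.comp <|
      tendsto_natCast_atTop_atTop.comp hcard
  refine IsLittleO.of_norm_right ?_
  simpa only [unionDefect, Nat.cast_add, Complex.norm_natCast] using
    (isLittleO_card_inter_map_addLeft hκ hauto).add (boundary_isBigO.trans_isLittleO one_isLittleO)

lemma tendsto_div_of_isLittleO_sub {𝕜 : Type*} [NormedField 𝕜] {u v w : ι → 𝕜} {L : 𝕜}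
    (huv : (fun n => u n - v n) =o[l] w) (hv : Tendsto (fun n => v n / w n) l (𝓝 L)) :
    Tendsto (fun n => u n / w n) l (𝓝 L) := by
  simpa only [zero_add, ← add_div, sub_add_cancel] using huv.tendsto_div_nhds_zero.add hv

lemma tendsto_card_div_card_of_isLittleO_unionDefect (hF : ∀ᶠ n in l, (#(F n) : ℂ) ≠ 0)
    (hdefect : (fun n => (unionDefect (E n) (F n) ((F n).map (addLeftEmbedding κ)) : ℝ))
      =o[l] fun n => (#(F n) : ℂ)) :
    Tendsto (fun n => (#(E n) : ℂ) / #(F n)) l (𝓝 2) := by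
  refine tendsto_div_of_isLittleO_sub (v := fun n => (#(F n) : ℂ) + #(F n)) ?_ ?_
  · refine (IsBigO.of_norm_le fun n => ?_).trans_isLittleO hdefect
    simpa using norm_sum_sub_add_le_unionDefect_mul (E n) (F n) ((F n).map (addLeftEmbedding κ))
      (g := fun _ => (1 : ℂ)) (c := 1) (by simp)
  · refine tendsto_const_nhds.congr' ?_
    filter_upwards [hF] with n hn
    rw [← two_mul, mul_div_cancel_right₀ _ hn]

lemma tendsto_corrSum_div_card_of_isLittleO_unionDefect
    (hdefect : (fun n => (unionDefect (E n) (F n) ((F n).map (addLeftEmbedding κ)) : ℝ))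
      =o[l] fun n => (#(F n) : ℂ))
    (hauto : ∀ f : ℝ → ℂ, Continuous f → HasCompactSupport f →
      Tendsto (fun n => autoCorr (F n) f) l (𝓝 (f 0)))
    {S : Set ℝ} (hS : UniformlyLocallyFinite S) (hES : ∀ n, (E n : Set ℝ) ⊆ S)
    (hFS : ∀ n, (F n : Set ℝ) ⊆ S) (hKS : ∀ n, ((F n).map (addLeftEmbedding κ) : Set ℝ) ⊆ S)
    {f : ℝ → ℂ} (hf : Continuous f) (hcs : HasCompactSupport f) :
    Tendsto (fun n => corrSum (E n) (E n) f / #(F n)) l (𝓝 (f 0 + f (-κ) + (f κ + f 0))) := by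
  obtain ⟨c, hc⟩ := hS.exists_norm_sum_sub_le hf hcs
  obtain ⟨c', hc'⟩ := hS.exists_norm_sum_sub_le (hf.comp continuous_neg)
    (hcs.comp_homeomorph (Homeomorph.neg ℝ))
  have error_isLittleO := (IsBigO.of_bound (3 * max c c') <| .of_forall fun n => by
    simpa using norm_corrSum_self_sub_le (E n) (F n) ((F n).map (addLeftEmbedding κ))
      (fun x => (hc _ (hES n) x).trans (le_max_left c c'))
      (fun x => (hc' _ (hFS n) x).trans (le_max_right c c'))
      (fun x => (hc' _ (hKS n) x).trans (le_max_right c c'))).trans_isLittleO hdefect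
  refine tendsto_div_of_isLittleO_sub error_isLittleO ?_
  have lim_self := hauto f hf hcs
  have lim_sub := hauto (fun z => f (z - κ)) (by fun_prop)
    (hcs.comp_homeomorph (Homeomorph.subRight κ))
  have lim_add := hauto (fun z => f (z + κ)) (by fun_prop)
    (hcs.comp_homeomorph (Homeomorph.addRight κ))
  simpa only [autoCorr_coe, corrSum_map_left, corrSum_map_right, sub_add_cancel,
    add_sub_cancel_right, zero_sub, zero_add, add_div] using
    (lim_self.add lim_sub).add (lim_add.add lim_self)

end Limits

theorem counting_autocorrelation_of_union_with_shift_general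
    {ι : Type*} {l : Filter ι} {Λ : Set ℝ} (hΛ : UniformlyLocallyFinite Λ) {a b : ι → ℝ}
    (hcard : Tendsto (fun n => (Λ ∩ Icc (a n) (b n)).ncard) l atTop)
    (hauto : ∀ f : ℝ → ℂ, Continuous f → HasCompactSupport f →
      Tendsto (fun n => autoCorr (Λ ∩ Icc (a n) (b n)) f) l (𝓝 (f 0)))
    {κ : ℝ} (hκ : κ ≠ 0) {f : ℝ → ℂ} (hf : Continuous f) (hcs : HasCompactSupport f) :
    Tendsto (fun n => autoCorr ((Λ ∪ (fun x => κ + x) '' Λ) ∩ Icc (a n) (b n)) f) l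
      (𝓝 (f 0 + (f κ + f (-κ)) / 2)) := by
  have hΓ := hΛ.union (hΛ.image_add_left κ)
  choose E hE using fun n => (hΓ.finite_inter_Icc (a n) (b n)).exists_finset_coe
  choose F hF using fun n => (hΛ.finite_inter_Icc (a n) (b n)).exists_finset_coe
  simp only [← hF, ncard_coe_finset] at hcard hauto
  simp only [← hE, autoCorr_coe]
  have card_ne_zero : ∀ᶠ n in l, (#(F n) : ℂ) ≠ 0 := by
    filter_upwards [hcard.eventually_ne_atTop 0] with n hn using Nat.cast_ne_zero.2 hn
  have hFΛ : ∀ n, (F n : Set ℝ) ⊆ Λ := fun n => (hF n).trans_subset inter_subset_left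
  have hdefect := isLittleO_unionDefect hΛ hE hF hcard hκ hauto
  have card_ratio := tendsto_card_div_card_of_isLittleO_unionDefect card_ne_zero hdefect
  have corrSum_ratio := tendsto_corrSum_div_card_of_isLittleO_unionDefect hdefect hauto hΓ
    (fun n => (hE n).trans_subset inter_subset_left)
    (fun n => (hFΛ n).trans subset_union_left)
    (fun n => by
      rw [Finset.coe_map]
      exact (image_mono (hFΛ n)).trans subset_union_right) hf hcs
  have limit_eq : (f 0 + f (-κ) + (f κ + f 0)) / 2 = f 0 + (f κ + f (-κ)) / 2 := by ring
  rw [← limit_eq]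
  refine (corrSum_ratio.div card_ratio two_ne_zero).congr' ?_
  filter_upwards [card_ne_zero] with n hn using div_div_div_cancel_right₀ hn _ _

theorem counting_autocorrelation_of_union_with_shift
    (Λ : Set ℝ) (hΛ : UnifDiscR Λ) (a b : ℕ → ℝ)
    (hw : Tendsto (fun n => b n - a n) atTop atTop)
    (hcard : Tendsto (fun n => (Λ ∩ Set.Icc (a n) (b n)).ncard) atTop atTop)
    (hauto : ∀ f : ℝ → ℂ, Continuous f → HasCompactSupport f →
      Tendsto (fun n => autoCorr (Λ ∩ Set.Icc (a n) (b n)) f) atTop (nhds (f 0)))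
    (k : ℤ) (hk : k ≠ 0) :
    ∀ f : ℝ → ℂ, Continuous f → HasCompactSupport f →
      Tendsto
        (fun n => autoCorr ((Λ ∪ ((fun x => (k : ℝ) + x) '' Λ)) ∩ Set.Icc (a n) (b n)) f)
        atTop (nhds (f 0 + (f (k : ℝ) + f (-(k : ℝ))) / 2)) := by
  intro f hf hcs
  exact counting_autocorrelation_of_union_with_shift_general hΛ.uniformlyLocallyFinite hcard hauto
    (Int.cast_ne_zero.2 hk) hf hcs
end
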